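/- Let q be an even prime power with q > 2, and let K be a k-arc of PG(2, q) with q − √q + 1 < k ≤ q + 1. Then K is contained in a unique (q + 2)-arc of PG(2, q). -/

import Mathlib

open Module

/-- Points of the projective space `PG(n, q)` over the field `F` (with `q = |F|`). -/
abbrev PGPoint (F : Type*) [Field F] (n : ℕ) := Projectivization F (Fin (n + 1) → F)

/-- The set of projective points lying in the projective subspace determined by
a linear subspace `W`. -/
def ptsIn {F : Type*} [Field F] {n : ℕ} (W : Submodule F (Fin (n + 1) → F)) :
    Set (PGPoint F n) := {P | P.submodule ≤ W}

/-- Three points of `PG(n, q)` are collinear if they lie on a common line. -/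
def Coll3 {F : Type*} [Field F] {n : ℕ} (P₁ P₂ P₃ : PGPoint F n) : Prop :=
  Module.finrank F ↥(P₁.submodule ⊔ P₂.submodule ⊔ P₃.submodule) ≤ 2

/-- A cap (a plane arc when `n = 2`): a set of points no three of which are collinear. -/
def IsCap {F : Type*} [Field F] {n : ℕ} (K : Set (PGPoint F n)) : Prop :=
  ∀ P₁ ∈ K, ∀ P₂ ∈ K, ∀ P₃ ∈ K, P₁ ≠ P₂ → P₁ ≠ P₃ → P₂ ≠ P₃ → ¬ Coll3 P₁ P₂ P₃

/-- A complete cap: a cap that is not contained in a cap with one more point. -/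
def IsCompleteCap {F : Type*} [Field F] {n : ℕ} (K : Set (PGPoint F n)) : Prop :=
  IsCap K ∧ ∀ P ∉ K, ¬ IsCap (insert P K)

/-- A tangent line of `K`: a line (2-dimensional linear subspace) meeting `K`
in exactly one point. -/
def IsTangent {F : Type*} [Field F] {n : ℕ} (K : Set (PGPoint F n))
    (W : Submodule F (Fin (n + 1) → F)) : Prop :=
  Module.finrank F W = 2 ∧ (ptsIn W ∩ K).ncard = 1

/-!
Lines are encoded by points of the dual plane, so that the tangents of the arc `K` at a point form
a set of `t = q + 2 - |K|` points on a dual line. Segre's lemma of tangents makes these sets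
compatible where two dual lines meet, so in even characteristic they are cut out by a form `Φ` of
degree `t` (the tangent envelope).

It remains to find a linear component of `Φ` over `GF(q)`: such a component is a point `N` lying on
no secant of `K`, so `K ∪ {N}` is a larger arc. Let `L` be the product of the dual lines of `K`.
Since `Φ` and `L` meet transversally in points `m` over `GF(q)`, Max Noether's theorem gives
`X_l · Frob X - X_l ^ q · X ≡ L · u` modulo `Φ` for some vector `u` of forms. Expanding `Φ` along
the line joining `X` and `Frob X`, the `j`-th coefficient is then, up to powers of `X_l`, a multiple
of `L ^ (j + 1)` modulo `Φ`, while its degree is only `t + j (q - 1)`; as `(t - 1) ^ 2 < q` this is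
less than `|K| (j + 1)`, so every coefficient vanishes modulo `Φ`. Hence `Φ` vanishes on the line
joining `m` and `u(m)`, for each tangent `m` of `K`.

The maximal arcs containing `K` thus have `q + 2` points. If two of them both contain `K` and `P`
lies on only the first, the lines joining `P` to the points of `K` meet the second in `|K|` further
points, which gives `2 |K| ≤ q + 2`.
-/

section LineExpansion

open Polynomial

variable {σ F A B : Type*} [CommRing F] [CommRing A] [CommRing B] [Algebra F A] [Algebra F B]

/-- The expansion of `Φ(z + s v)` as a polynomial in `s`; its coefficients are the polar forms
of `Φ` along the line joining `z` and `v`. -/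
noncomputable def lineExpansion (Φ : MvPolynomial σ F) (z v : σ → B) : B[X] :=
  MvPolynomial.aeval (fun i => C (z i) + C (v i) * X) Φ

lemma aeval_lineExpansion [Algebra B A] [IsScalarTower F B A] (Φ : MvPolynomial σ F) (z v : σ → B)
    (s : A) :
    aeval s (lineExpansion Φ z v) =
      MvPolynomial.aeval (fun i => algebraMap B A (z i) + algebraMap B A (v i) * s) Φ := by
  have h := MvPolynomial.comp_aeval_apply (fun i => C (z i) + C (v i) * X)
    ((aeval (R := B) s).restrictScalars F) Φ
  simpa [lineExpansion] using h

lemma coeff_zero_lineExpansion (Φ : MvPolynomial σ F) (z v : σ → B) :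
    (lineExpansion Φ z v).coeff 0 = MvPolynomial.aeval z Φ := by
  simpa [coeff_zero_eq_aeval_zero] using aeval_lineExpansion Φ z v (0 : B)

lemma map_lineExpansion (f : A →ₐ[F] B) (Φ : MvPolynomial σ F) (z v : σ → A) :
    (lineExpansion Φ z v).map (f : A →+* B) = lineExpansion Φ (f ∘ z) (f ∘ v) := by
  have h := MvPolynomial.comp_aeval_apply (fun i => C (z i) + C (v i) * X) (mapAlgHom f) Φ
  simpa [lineExpansion] using h

lemma lineExpansion_smul_right (Φ : MvPolynomial σ F) (z v : σ → B) (b : B) :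
    lineExpansion Φ z (b • v) = (lineExpansion Φ z v).comp (C b * X) := by
  have h := aeval_lineExpansion Φ z v (C b * X)
  rw [← comp_eq_aeval] at h
  rw [h, lineExpansion]
  congr 2
  ext1 i
  simp only [Pi.smul_apply, smul_eq_mul, map_mul, algebraMap_eq]
  ring

lemma homogenize_lineExpansion {Φ : MvPolynomial σ F} {t : ℕ} (hΦ : Φ.IsHomogeneous t)
    (z v : σ → B) :
    (lineExpansion Φ z v).homogenize t =
      MvPolynomial.aeval
        (fun i => MvPolynomial.C (z i) * MvPolynomial.X 1
          + MvPolynomial.C (v i) * MvPolynomial.X (0 : Fin 2)) Φ := by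
  refine homogenize_eq_of_isHomogeneous ?_ ?_
  · simpa using hΦ.aeval (n := 1) (fun i => MvPolynomial.C (z i) * MvPolynomial.X 1
      + MvPolynomial.C (v i) * MvPolynomial.X (0 : Fin 2)) fun i =>
        (MvPolynomial.isHomogeneous_C_mul_X _ _).add (MvPolynomial.isHomogeneous_C_mul_X _ _)
  · have h := MvPolynomial.comp_aeval_apply
      (fun i => MvPolynomial.C (z i) * MvPolynomial.X 1
        + MvPolynomial.C (v i) * MvPolynomial.X (0 : Fin 2))
      ((MvPolynomial.aeval (R := B) ![(X : B[X]), 1]).restrictScalars F) Φ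
    simpa [lineExpansion, MvPolynomial.algHom_C] using h

lemma aeval_smul_add_smul {Φ : MvPolynomial σ F} {t : ℕ} (hΦ : Φ.IsHomogeneous t) (z v : σ → B)
    (a b : B) :
    MvPolynomial.aeval (a • z + b • v) Φ =
      ∑ i ∈ Finset.range (t + 1), a ^ (t - i) * b ^ i * (lineExpansion Φ z v).coeff i := by
  have h := MvPolynomial.comp_aeval_apply
      (fun i => MvPolynomial.C (z i) * MvPolynomial.X 1
        + MvPolynomial.C (v i) * MvPolynomial.X (0 : Fin 2))
      ((MvPolynomial.aeval (R := B) ![b, a]).restrictScalars F) Φ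
  rw [← homogenize_lineExpansion hΦ] at h
  have e : a • z + b • v = fun i => z i * a + v i * b := by
    ext i; simp [mul_comm]
  rw [e]
  simp only [AlgHom.restrictScalars_apply, map_add, map_mul, MvPolynomial.aeval_X,
    Matrix.cons_val_one, Matrix.cons_val_zero, MvPolynomial.algHom_C, Algebra.algebraMap_self,
    RingHom.id_apply] at h
  rw [← h, homogenize, map_sum, Finset.Nat.sum_antidiagonal_eq_sum_range_succ_mk]
  refine Finset.sum_congr rfl fun i _ => ?_
  simp [MvPolynomial.aeval_monomial, Finsupp.prod_fintype, Fin.prod_univ_two]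
  ring

lemma lineExpansion_smul_sub_smul {Φ : MvPolynomial σ F} {t : ℕ} (hΦ : Φ.IsHomogeneous t)
    (z v : σ → B) (a b : B) :
    lineExpansion Φ z (a • v - b • z) =
      ∑ i ∈ Finset.range (t + 1),
        (1 - C b * X) ^ (t - i) * (C a * X) ^ i * C ((lineExpansion Φ z v).coeff i) := by
  have h := aeval_smul_add_smul hΦ (fun i => C (z i)) (fun i => C (v i)) (1 - C b * X) (C a * X)
  have e := map_lineExpansion (IsScalarTower.toAlgHom F B B[X]) Φ z v
  simp only [Function.comp_def, IsScalarTower.coe_toAlgHom', ← C_eq_algebraMap] at e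
  rw [← e] at h
  simp only [coeff_map, RingHom.coe_coe, IsScalarTower.coe_toAlgHom', ← C_eq_algebraMap] at h
  rw [← h, lineExpansion]
  congr 2
  ext1 i
  simp only [Pi.sub_apply, Pi.add_apply, Pi.smul_apply, smul_eq_mul, map_sub, map_mul]
  ring

lemma aeval_smul_of_isHomogeneous {Φ : MvPolynomial σ F} {t : ℕ} (hΦ : Φ.IsHomogeneous t)
    (a : B) (z : σ → B) : MvPolynomial.aeval (a • z) Φ = a ^ t * MvPolynomial.aeval z Φ := by
  simpa [Finset.sum_range_succ', coeff_zero_lineExpansion] using aeval_smul_add_smul hΦ z 0 a 0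

lemma coeff_lineExpansion_smul_sub_smul {Φ : MvPolynomial σ F} {t : ℕ} (hΦ : Φ.IsHomogeneous t)
    (z v : σ → B) (a b : B) {j : ℕ} (hj : j ≤ t)
    (h : ∀ i < j, (lineExpansion Φ z v).coeff i = 0) :
    (lineExpansion Φ z (a • v - b • z)).coeff j = a ^ j * (lineExpansion Φ z v).coeff j := by
  rw [lineExpansion_smul_sub_smul hΦ, finsetSum_coeff,
    Finset.sum_eq_single_of_mem j (Finset.mem_range_succ_iff.2 hj)]
  · rw [coeff_mul_C, mul_pow, ← C_pow, mul_left_comm, coeff_C_mul,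
      coeff_mul_X_pow', if_pos le_rfl, Nat.sub_self]
    simp [coeff_zero_eq_eval_zero]
  · intro i _ hij
    rcases hij.lt_or_gt with hlt | hgt
    · simp [h i hlt]
    · rw [coeff_mul_C, mul_pow, ← mul_assoc, coeff_mul_X_pow', if_neg hgt.not_ge, zero_mul]

lemma coeff_lineExpansion_smul_right (Φ : MvPolynomial σ F) (z v : σ → B) (b : B) (j : ℕ) :
    (lineExpansion Φ z (b • v)).coeff j = b ^ j * (lineExpansion Φ z v).coeff j := by
  rw [lineExpansion_smul_right, comp_C_mul_X_coeff, mul_comm]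

lemma coeff_self_lineExpansion {Φ : MvPolynomial σ F} {t : ℕ} (hΦ : Φ.IsHomogeneous t)
    (z v : σ → B) : (lineExpansion Φ z v).coeff t = MvPolynomial.aeval v Φ := by
  have h := aeval_smul_add_smul hΦ z v 0 1
  rw [zero_smul, one_smul, zero_add, Finset.sum_range_succ, Finset.sum_eq_zero] at h
  · simpa using h.symm
  · intro i hi
    rw [zero_pow (Nat.sub_ne_zero_of_lt (Finset.mem_range.1 hi)), zero_mul, zero_mul]

lemma pow_dvd_mul_coeff_lineExpansion {Φ : MvPolynomial σ F} {t : ℕ} (hΦ : Φ.IsHomogeneous t)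
    {z v u : σ → B} {a b c : B} (hu : a • v - b • z = c • u) (hv : MvPolynomial.aeval v Φ = 0)
    {j : ℕ} (hj : j ≤ t) (h : ∀ i < j, (lineExpansion Φ z v).coeff i = 0) :
    c ^ (j + 1) ∣ b ^ (t - j) * a ^ j * (lineExpansion Φ z v).coeff j := by
  have hsum := aeval_smul_add_smul hΦ z (a • v - b • z) b 1
  rw [one_smul, add_sub_cancel, aeval_smul_of_isHomogeneous hΦ, hv, mul_zero,
    ← Finset.add_sum_erase _ _ (Finset.mem_range_succ_iff.2 hj),
    coeff_lineExpansion_smul_sub_smul hΦ z v a b hj h, one_pow, mul_one, ← mul_assoc] at hsum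
  rw [eq_neg_of_add_eq_zero_left hsum.symm, dvd_neg]
  refine Finset.dvd_sum fun i hi => Dvd.dvd.mul_left ?_ _
  obtain ⟨hij, hi⟩ := Finset.mem_erase.1 hi
  rcases hij.lt_or_gt with hlt | hlt
  · rw [coeff_lineExpansion_smul_sub_smul hΦ z v a b (Finset.mem_range_succ_iff.1 hi)
      fun k hk => h k (hk.trans hlt), h i hlt, mul_zero]
    exact dvd_zero _
  · rw [hu, coeff_lineExpansion_smul_right]
    exact Dvd.dvd.mul_right (pow_dvd_pow c hlt) _

lemma coeff_lineExpansion_comp (f : A →ₐ[F] B) (Φ : MvPolynomial σ F) (z v : σ → A) (j : ℕ) :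
    (lineExpansion Φ (f ∘ z) (f ∘ v)).coeff j = f ((lineExpansion Φ z v).coeff j) := by
  rw [← map_lineExpansion, coeff_map, RingHom.coe_coe]

lemma mkₐ_smul_sub_smul {I : Ideal B} {z v u : σ → B} {a b c : B}
    (hu : ∀ i, a * v i - b * z i - c * u i ∈ I) :
    Ideal.Quotient.mkₐ F I a • (Ideal.Quotient.mkₐ F I ∘ v) -
        Ideal.Quotient.mkₐ F I b • (Ideal.Quotient.mkₐ F I ∘ z) =
      Ideal.Quotient.mkₐ F I c • (Ideal.Quotient.mkₐ F I ∘ u) := by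
  ext i
  simpa [sub_eq_zero] using Ideal.Quotient.eq_zero_iff_mem.2 (hu i)

lemma mul_coeff_lineExpansion_mem_sup {Φ : MvPolynomial σ F} {t : ℕ} (hΦ : Φ.IsHomogeneous t)
    {I : Ideal B} {z v u : σ → B} {a b c : B} (hu : ∀ i, a * v i - b * z i - c * u i ∈ I)
    (hv : MvPolynomial.aeval v Φ ∈ I) {j : ℕ} (hj : j ≤ t)
    (h : ∀ i < j, (lineExpansion Φ z v).coeff i ∈ I) :
    b ^ (t - j) * a ^ j * (lineExpansion Φ z v).coeff j ∈ I ⊔ Ideal.span {c ^ (j + 1)} := by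
  obtain ⟨e, he⟩ := pow_dvd_mul_coeff_lineExpansion hΦ (mkₐ_smul_sub_smul (F := F) hu)
    ((MvPolynomial.comp_aeval_apply v (Ideal.Quotient.mkₐ F I) Φ).symm.trans
      (Ideal.Quotient.eq_zero_iff_mem.2 hv)) hj fun i hi => by
        rw [coeff_lineExpansion_comp]
        exact Ideal.Quotient.eq_zero_iff_mem.2 (h i hi)
  obtain ⟨e, rfl⟩ := Ideal.Quotient.mkₐ_surjective F I e
  rw [coeff_lineExpansion_comp] at he
  simp only [← map_pow, ← map_mul] at he
  exact Submodule.mem_sup.2 ⟨_, Ideal.Quotient.eq.1 he, _,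
    Ideal.mul_mem_right e _ (Ideal.mem_span_singleton_self (c ^ (j + 1))), sub_add_cancel _ _⟩

lemma pow_mul_coeff_lineExpansion_mem {Φ : MvPolynomial σ F} {t : ℕ} (hΦ : Φ.IsHomogeneous t)
    {I : Ideal B} {z v u : σ → B} {a b c : B} (hu : ∀ i, a * v i - b * z i - c * u i ∈ I)
    {j : ℕ} (hj : j ≤ t) (h : ∀ i ≤ j, (lineExpansion Φ z v).coeff i ∈ I) :
    c ^ j * (lineExpansion Φ z u).coeff j ∈ I := by
  have hzero : ∀ i ≤ j, (lineExpansion Φ (Ideal.Quotient.mkₐ F I ∘ z)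
      (Ideal.Quotient.mkₐ F I ∘ v)).coeff i = 0 := fun i hi => by
    rw [coeff_lineExpansion_comp]
    exact Ideal.Quotient.eq_zero_iff_mem.2 (h i hi)
  have hcoeff := coeff_lineExpansion_smul_sub_smul hΦ _ _ (Ideal.Quotient.mkₐ F I a)
    (Ideal.Quotient.mkₐ F I b) hj fun i hi => hzero i hi.le
  rw [hzero j le_rfl, mul_zero, mkₐ_smul_sub_smul hu, coeff_lineExpansion_smul_right,
    coeff_lineExpansion_comp, ← map_pow, ← map_mul] at hcoeff
  exact Ideal.Quotient.eq_zero_iff_mem.1 hcoeff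

lemma isHomogeneous_coeff_mul {p r : (MvPolynomial σ F)[X]} {d d' e : ℕ}
    (hp : ∀ j, (p.coeff j).IsHomogeneous (d + j * e))
    (hr : ∀ j, (r.coeff j).IsHomogeneous (d' + j * e)) (j : ℕ) :
    ((p * r).coeff j).IsHomogeneous (d + d' + j * e) := by
  rw [coeff_mul]
  refine MvPolynomial.IsHomogeneous.sum _ _ _ fun ij hij => ?_
  convert (hp ij.1).mul (hr ij.2) using 1
  rw [← Finset.HasAntidiagonal.mem_antidiagonal.1 hij]
  ring

lemma isHomogeneous_coeff_one (e j : ℕ) :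
    ((1 : (MvPolynomial σ F)[X]).coeff j).IsHomogeneous (0 + j * e) := by
  rw [coeff_one]
  split_ifs with h
  · simpa [h] using MvPolynomial.isHomogeneous_one σ F
  · exact MvPolynomial.isHomogeneous_zero _ _ _

lemma isHomogeneous_coeff_pow {p : (MvPolynomial σ F)[X]} {d e : ℕ}
    (hp : ∀ j, (p.coeff j).IsHomogeneous (d + j * e)) (n j : ℕ) :
    ((p ^ n).coeff j).IsHomogeneous (n * d + j * e) := by
  induction n generalizing j with
  | zero => simpa using isHomogeneous_coeff_one e j
  | succ n ih => simpa [pow_succ, add_mul] using isHomogeneous_coeff_mul ih hp j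

lemma isHomogeneous_coeff_prod {ι : Type*} {s : Finset ι} {p : ι → (MvPolynomial σ F)[X]}
    {d : ι → ℕ} {e : ℕ} (hp : ∀ i ∈ s, ∀ j, ((p i).coeff j).IsHomogeneous (d i + j * e)) (j : ℕ) :
    ((∏ i ∈ s, p i).coeff j).IsHomogeneous (∑ i ∈ s, d i + j * e) := by
  classical
  induction s using Finset.induction_on generalizing j with
  | empty => simpa using isHomogeneous_coeff_one e j
  | insert a s ha ih =>
    rw [Finset.prod_insert ha, Finset.sum_insert ha]
    exact isHomogeneous_coeff_mul (hp a (Finset.mem_insert_self a s))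
      (ih fun i hi => hp i (Finset.mem_insert_of_mem hi)) j

lemma isHomogeneous_coeff_lineExpansion_X {Φ : MvPolynomial σ F} {t : ℕ} (hΦ : Φ.IsHomogeneous t)
    {v : σ → MvPolynomial σ F} {e : ℕ} (hv : ∀ i, (v i).IsHomogeneous (1 + e)) (j : ℕ) :
    ((lineExpansion Φ MvPolynomial.X v).coeff j).IsHomogeneous (t + j * e) := by
  rw [lineExpansion, MvPolynomial.aeval_def, MvPolynomial.eval₂_eq, finsetSum_coeff]
  refine MvPolynomial.IsHomogeneous.sum _ _ _ fun m hm => ?_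
  have hlin (i : σ) (j : ℕ) :
      ((C (MvPolynomial.X i) + C (v i) * X : (MvPolynomial σ F)[X]).coeff j).IsHomogeneous
        (1 + j * e) := by
    match j with
    | 0 => simpa using MvPolynomial.isHomogeneous_X F i
    | 1 => simpa [coeff_C] using hv i
    | j + 2 => simpa [coeff_C, coeff_X] using MvPolynomial.isHomogeneous_zero σ F _
  have hmon := isHomogeneous_coeff_prod (s := m.support)
    (fun i _ => isHomogeneous_coeff_pow (hlin i) (m i)) j
  have hdeg : ∑ i ∈ m.support, m i * 1 = t := by
    simpa [Finsupp.weight_apply, Finsupp.sum] using hΦ (MvPolynomial.mem_support_iff.1 hm)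
  rw [hdeg] at hmon
  simpa [IsScalarTower.algebraMap_apply F (MvPolynomial σ F) (MvPolynomial σ F)[X],
    ← C_eq_algebraMap, coeff_C_mul, MvPolynomial.algebraMap_eq] using
    hmon.C_mul (MvPolynomial.coeff m Φ)

end LineExpansion

section LinearForms

open MvPolynomial

variable {σ F : Type*} [Fintype σ] [Field F]

/-- The linear form `∑ xᵢ Xᵢ` with coefficient vector `x`, i.e. the equation of the hyperplane
dual to `x`. -/
noncomputable def linearForm : (σ → F) →ₗ[F] MvPolynomial σ F :=
  Fintype.linearCombination F X

lemma linearForm_apply (x : σ → F) : linearForm x = ∑ i, x i • X i := rfl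

lemma eval_linearForm (x p : σ → F) : eval p (linearForm x) = x ⬝ᵥ p := by
  simp [linearForm_apply, dotProduct]

lemma isHomogeneous_linearForm (x : σ → F) : (linearForm x).IsHomogeneous 1 :=
  IsHomogeneous.sum _ _ _ fun i _ => by
    simpa only [smul_eq_C_mul] using isHomogeneous_C_mul_X (x i) i

lemma linearForm_ne_zero {x : σ → F} (hx : x ≠ 0) : linearForm x ≠ 0 := by
  classical
  obtain ⟨i, hi⟩ := Function.ne_iff.1 hx
  intro h
  apply hi
  simpa [eval_linearForm] using congrArg (eval (Pi.single i 1)) h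

lemma prime_linearForm {x : σ → F} (hx : x ≠ 0) : Prime (linearForm x) := by
  rw [← irreducible_iff_prime]
  refine irreducible_of_totalDegree_eq_one
    ((isHomogeneous_linearForm x).totalDegree (linearForm_ne_zero hx)) fun a ha => ?_
  obtain ⟨m, hm⟩ := ne_zero_iff.1 (linearForm_ne_zero hx)
  exact isUnit_iff_ne_zero.2 (ne_zero_of_dvd_ne_zero hm (ha m))

end LinearForms

section ConeIdeal

open MvPolynomial

variable {σ F : Type*} [Field F]

lemma dvd_homogeneousComponent {σ R : Type*} [CommSemiring R] {f g : MvPolynomial σ R} {d : ℕ}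
    (hf : f.IsHomogeneous d) (h : f ∣ g) (n : ℕ) : f ∣ homogeneousComponent n g := by
  let := gradedAlgebra (σ := σ) (R := R)
  rw [← Ideal.mem_span_singleton] at h ⊢
  refine homogeneousComponent_mem_of_mem (Ideal.homogeneous_span _ _ ?_) h n
  rintro _ rfl
  exact ⟨d, hf⟩

/-- The ideal of the line through the origin spanned by the vector `p`, i.e. the homogeneous ideal
of the projective point `p`. -/
noncomputable def coneIdeal (p : σ → F) : Ideal (MvPolynomial σ F) :=
  RingHom.ker (aeval (fun i => Polynomial.C (p i) * Polynomial.X) :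
    MvPolynomial σ F →ₐ[F] Polynomial F)

instance isPrime_coneIdeal (p : σ → F) : (coneIdeal p).IsPrime :=
  RingHom.ker_isPrime _

lemma mem_coneIdeal_iff {Y : MvPolynomial σ F} {d : ℕ} (hY : Y.IsHomogeneous d) {p : σ → F} :
    Y ∈ coneIdeal p ↔ eval p Y = 0 := by
  have hX : aeval (fun i => Polynomial.C (p i) * Polynomial.X) Y
      = Polynomial.X ^ d * Polynomial.C (eval p Y) := by
    have h := aeval_smul_of_isHomogeneous hY (Polynomial.X : Polynomial F)
      (algebraMap F (Polynomial F) ∘ p)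
    rw [aeval_algebraMap_apply, aeval_eq_eval] at h
    rw [← Polynomial.algebraMap_eq]
    refine Eq.trans ?_ h
    congr 2
    ext1 i
    exact mul_comm _ _
  simp [coneIdeal, RingHom.mem_ker, hX]

lemma coneIdeal_le_coneIdeal_smul (a : F) (p : σ → F) : coneIdeal p ≤ coneIdeal (a • p) := by
  intro Y hY
  rw [coneIdeal, RingHom.mem_ker] at hY ⊢
  have h := comp_aeval_apply (fun i => Polynomial.C (p i) * Polynomial.X)
    (Polynomial.aeval (Polynomial.C a * Polynomial.X)) Y
  rw [hY, map_zero] at h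
  rw [h]
  congr 2
  ext1 i
  simp [mul_left_comm, mul_assoc]

lemma coneIdeal_smul {a : F} (ha : a ≠ 0) (p : σ → F) : coneIdeal (a • p) = coneIdeal p :=
  le_antisymm (by simpa [smul_smul, ha] using coneIdeal_le_coneIdeal_smul a⁻¹ (a • p))
    (coneIdeal_le_coneIdeal_smul a p)

lemma linearForm_mem_coneIdeal [Fintype σ] {x p : σ → F} :
    linearForm x ∈ coneIdeal p ↔ x ⬝ᵥ p = 0 := by
  rw [mem_coneIdeal_iff (isHomogeneous_linearForm x), eval_linearForm]

lemma dvd_of_mem_span_pair {f g Y : MvPolynomial σ F} {d e n : ℕ}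
    (hf : f.IsHomogeneous d) (hg : g.IsHomogeneous e) (hY : Y.IsHomogeneous n) (hne : n < e)
    (h : Y ∈ Ideal.span {f, g}) : f ∣ Y := by
  obtain ⟨A, B, rfl⟩ := Ideal.mem_span_pair.1 h
  have hB : homogeneousComponent n (B * g) = 0 := by
    by_contra hB
    have hdvd := dvd_homogeneousComponent hg (Dvd.intro_left B rfl) n
    have hle := totalDegree_le_of_dvd_of_isDomain hdvd hB
    rw [hg.totalDegree (ne_zero_of_dvd_ne_zero hB hdvd),
      (homogeneousComponent_isHomogeneous n _).totalDegree hB] at hle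
    omega
  rw [← homogeneousComponent_eq_self hY, map_add, hB, add_zero]
  exact dvd_homogeneousComponent hf (Dvd.intro_left A rfl) n

lemma exists_X_notMem_coneIdeal {p : σ → F} (hp : p ≠ 0) :
    ∃ i, (X i : MvPolynomial σ F) ∉ coneIdeal p := by
  obtain ⟨i, hi⟩ := Function.ne_iff.1 hp
  refine ⟨i, ?_⟩
  rwa [mem_coneIdeal_iff (isHomogeneous_X F i), eval_X]

end ConeIdeal

section Plane

open MvPolynomial Matrix

variable {F : Type*} [Field F]

lemma exists_dotProduct_eq_one {p : Fin 3 → F} (hp : p ≠ 0) : ∃ c, c ⬝ᵥ p = 1 := by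
  obtain ⟨i, hi⟩ := Function.ne_iff.1 hp
  exact ⟨Pi.single i (p i)⁻¹, by simpa using inv_mul_cancel₀ hi⟩

lemma exists_eq_smul_add_smul {x y z : Fin 3 → F} (hxy : x ⨯₃ y ≠ 0) (hz : (x ⨯₃ y) ⬝ᵥ z = 0) :
    ∃ a b : F, z = a • x + b • y := by
  obtain ⟨c, hc⟩ := exists_dotProduct_eq_one hxy
  have hcramer : (c ⬝ᵥ (x ⨯₃ y)) • z =
      ((x ⨯₃ y) ⬝ᵥ z) • c + (c ⬝ᵥ (z ⨯₃ y)) • x + (c ⬝ᵥ (x ⨯₃ z)) • y := by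
    ext i
    fin_cases i <;> simp [cross_apply, dotProduct, Fin.sum_univ_three] <;> ring
  exact ⟨_, _, by simpa [hc, hz] using hcramer⟩

lemma triple_product_smul_X (c x y : Fin 3 → F) (i : Fin 3) :
    (c ⬝ᵥ (x ⨯₃ y)) • (X i : MvPolynomial (Fin 3) F) =
      (x ⨯₃ y) i • linearForm c + (y ⨯₃ c) i • linearForm x + (c ⨯₃ x) i • linearForm y := by
  fin_cases i <;>
    simp [cross_apply, dotProduct, Fin.sum_univ_three, linearForm_apply, smul_eq_C_mul] <;> ring

lemma coneIdeal_cross {x y : Fin 3 → F} (hxy : x ⨯₃ y ≠ 0) :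
    coneIdeal (x ⨯₃ y) = Ideal.span {linearForm x, linearForm y} := by
  refine le_antisymm (fun Y hY => ?_) ?_
  · obtain ⟨c, hc⟩ := exists_dotProduct_eq_one hxy
    set I := Ideal.span {linearForm x, linearForm y}
    set π := Ideal.Quotient.mkₐ F I
    have hx : π (linearForm x) = 0 :=
      Ideal.Quotient.eq_zero_iff_mem.2 (Ideal.subset_span (Set.mem_insert _ _))
    have hy : π (linearForm y) = 0 :=
      Ideal.Quotient.eq_zero_iff_mem.2 (Ideal.subset_span (Set.mem_insert_of_mem _ rfl))
    have hX (i : Fin 3) : π (X i) = (x ⨯₃ y) i • π (linearForm c) := by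
      simpa [hc, hx, hy] using congrArg π (triple_product_smul_X c x y i)
    have hπ : π = (Polynomial.aeval (π (linearForm c))).comp
        (aeval fun i => Polynomial.C ((x ⨯₃ y) i) * Polynomial.X) := by
      ext i
      simpa [hX] using Algebra.smul_def ((x ⨯₃ y) i) (π (linearForm c))
    rw [← Ideal.Quotient.eq_zero_iff_mem, ← Ideal.Quotient.mkₐ_eq_mk F]
    change π Y = 0
    rw [hπ, AlgHom.comp_apply, (RingHom.mem_ker).1 hY, map_zero]
  · rw [Ideal.span_le, Set.insert_subset_iff, Set.singleton_subset_iff]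
    exact ⟨linearForm_mem_coneIdeal.2 (dot_self_cross x y),
      linearForm_mem_coneIdeal.2 (dot_cross_self x y)⟩

lemma linearForm_not_dvd {x y : Fin 3 → F} (hxy : x ⨯₃ y ≠ 0) : ¬ linearForm x ∣ linearForm y := by
  intro h
  obtain ⟨c, hc⟩ := exists_dotProduct_eq_one hxy
  have h0 := map_dvd (eval (x ⨯₃ c)) h
  rw [eval_linearForm, eval_linearForm, dot_self_cross, zero_dvd_iff,
    triple_product_permutation, triple_product_permutation, ← cross_anticomm, dotProduct_neg,
    hc] at h0
  exact neg_ne_zero.2 one_ne_zero h0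

lemma mem_span_linearForm_prod {ι : Type*} {s : Finset ι} {x : Fin 3 → F} {y : ι → Fin 3 → F}
    (hxy : ∀ i ∈ s, x ⨯₃ y i ≠ 0)
    (hy : ∀ i ∈ s, ∀ j ∈ s, i ≠ j → x ⬝ᵥ (y i ⨯₃ y j) ≠ 0) {Y : MvPolynomial (Fin 3) F}
    (hY : ∀ i ∈ s, Y ∈ coneIdeal (x ⨯₃ y i)) :
    Y ∈ Ideal.span {linearForm x, ∏ i ∈ s, linearForm (y i)} := by
  classical
  induction s using Finset.induction_on with
  | empty => exact Ideal.mem_span_pair.2 ⟨0, Y, by simp⟩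
  | insert k s hk ih =>
    have hks : ∀ i ∈ s, i ∈ insert k s := fun i hi => Finset.mem_insert_of_mem hi
    have hkk : k ∈ insert k s := Finset.mem_insert_self k s
    obtain ⟨A, B, rfl⟩ := Ideal.mem_span_pair.1 <|
      ih (fun i hi => hxy i (hks i hi)) (fun i hi j hj => hy i (hks i hi) j (hks j hj))
        (fun i hi => hY i (hks i hi))
    have hB : B ∈ coneIdeal (x ⨯₃ y k) := by
      have hx : linearForm x ∈ coneIdeal (x ⨯₃ y k) :=
        linearForm_mem_coneIdeal.2 (dot_self_cross x (y k))
      have hBprod := (Ideal.add_mem_iff_right _ (Ideal.mul_mem_left _ A hx)).1 (hY k hkk)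
      refine ((isPrime_coneIdeal _).mem_or_mem hBprod).resolve_right fun hprod => ?_
      obtain ⟨i, hi, hmem⟩ := (Ideal.IsPrime.prod_mem_iff).1 hprod
      rw [linearForm_mem_coneIdeal, triple_product_permutation] at hmem
      exact hy k hkk i (hks i hi) (ne_of_mem_of_not_mem hi hk).symm hmem
    rw [coneIdeal_cross (hxy k hkk)] at hB
    obtain ⟨A', B', rfl⟩ := Ideal.mem_span_pair.1 hB
    refine Ideal.mem_span_pair.2 ⟨A + A' * ∏ i ∈ s, linearForm (y i), B', ?_⟩
    rw [Finset.prod_insert hk]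
    ring

lemma coll3_iff_triple_product_eq_zero {P Q R : PGPoint F 2} :
    Coll3 P Q R ↔ P.rep ⬝ᵥ (Q.rep ⨯₃ R.rep) = 0 := by
  have hspan : P.submodule ⊔ Q.submodule ⊔ R.submodule =
      Submodule.span F (Set.range ![P.rep, Q.rep, R.rep]) := by
    rw [P.submodule_eq, Q.submodule_eq, R.submodule_eq, ← Submodule.span_union,
      ← Submodule.span_union]
    congr 1
    ext v
    simp [Matrix.range_cons]
  have hindep : LinearIndependent F ![P.rep, Q.rep, R.rep] ↔ P.rep ⬝ᵥ (Q.rep ⨯₃ R.rep) ≠ 0 := by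
    rw [triple_product_eq_det, ← isUnit_iff_ne_zero]
    exact linearIndependent_rows_iff_isUnit.trans
      (isUnit_iff_isUnit_det (of ![P.rep, Q.rep, R.rep]))
  have hle := finrank_range_le_card (R := F) ![P.rep, Q.rep, R.rep]
  rw [Coll3, hspan, ← not_iff_not, ← ne_eq, ← hindep, linearIndependent_iff_card_eq_finrank_span]
  simp only [Set.finrank, Fintype.card_fin] at hle ⊢
  omega

lemma cross_rep_ne_zero {P Q : PGPoint F 2} (h : P ≠ Q) : P.rep ⨯₃ Q.rep ≠ 0 := by
  contrapose! h
  rwa [← P.mk_rep, ← Q.mk_rep, Projectivization.mk_eq_mk_iff_crossProduct_eq_zero]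

lemma IsCap.triple_product_ne_zero {K : Set (PGPoint F 2)} (hK : IsCap K) {P Q R : PGPoint F 2}
    (hP : P ∈ K) (hQ : Q ∈ K) (hR : R ∈ K) (hPQ : P ≠ Q) (hPR : P ≠ R) (hQR : Q ≠ R) :
    P.rep ⬝ᵥ (Q.rep ⨯₃ R.rep) ≠ 0 :=
  fun h => hK P hP Q hQ R hR hPQ hPR hQR (coll3_iff_triple_product_eq_zero.2 h)

lemma IsCap.mono {n : ℕ} {K L : Set (PGPoint F n)} (hL : IsCap L) (h : K ⊆ L) : IsCap K :=
  fun P hP Q hQ R hR => hL P (h hP) Q (h hQ) R (h hR)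

lemma coll3_rotate {n : ℕ} {P Q R : PGPoint F n} : Coll3 P Q R ↔ Coll3 Q R P := by
  rw [Coll3, Coll3, sup_comm (Q.submodule ⊔ R.submodule), sup_assoc]

lemma IsCap.insert_of_not_coll3 {n : ℕ} {K : Set (PGPoint F n)} (hK : IsCap K) {N : PGPoint F n}
    (hN : ∀ P ∈ K, ∀ Q ∈ K, P ≠ Q → ¬ Coll3 N P Q) : IsCap (insert N K) := by
  rintro P₁ (rfl | h₁) P₂ (rfl | h₂) P₃ (rfl | h₃) h₁₂ h₁₃ h₂₃
  all_goals try contradiction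
  · exact hN P₂ h₂ P₃ h₃ h₂₃
  · exact coll3_rotate.not.1 (coll3_rotate.not.1 (hN P₃ h₃ P₁ h₁ h₁₃.symm))
  · exact coll3_rotate.not.1 (hN P₁ h₁ P₂ h₂ h₁₂)
  · exact hK P₁ h₁ P₂ h₂ P₃ h₃ h₁₂ h₁₃ h₂₃

lemma IsCap.exists_isCompleteCap [Finite F] {n : ℕ} {K : Set (PGPoint F n)} (hK : IsCap K) :
    ∃ A, IsCompleteCap A ∧ K ⊆ A := by
  obtain ⟨A, hKA, hA⟩ := (Set.toFinite {A : Set (PGPoint F n) | IsCap A}).exists_le_maximal hK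
  exact ⟨A, ⟨hA.1, fun P hP hcap => hP (hA.2 hcap (Set.subset_insert P A) (Set.mem_insert P A))⟩,
    hKA⟩

lemma IsCap.exists_glue {K : Finset (PGPoint F 2)} (hK : IsCap (K : Set (PGPoint F 2)))
    (h : PGPoint F 2 → MvPolynomial (Fin 3) F)
    (hcompat : ∀ P ∈ K, ∀ Q ∈ K, P ≠ Q → h P - h Q ∈ coneIdeal (P.rep ⨯₃ Q.rep)) :
    ∃ H, ∀ P ∈ K, linearForm P.rep ∣ H - h P := by
  classical
  induction K using Finset.induction_on with
  | empty => simp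
  | insert P K hPK ih =>
    have hmem : ∀ Q ∈ K, Q ∈ insert P K := fun Q hQ => Finset.mem_insert_of_mem hQ
    have hne : ∀ Q ∈ K, P ≠ Q := fun Q hQ => (ne_of_mem_of_not_mem hQ hPK).symm
    have hP : P ∈ insert P K := Finset.mem_insert_self P K
    obtain ⟨H, hH⟩ := ih (hK.mono (by simp))
      (fun Q hQ R hR => hcompat Q (hmem Q hQ) R (hmem R hR))
    have hHP : H - h P ∈ Ideal.span {linearForm P.rep, ∏ Q ∈ K, linearForm Q.rep} := by
      refine mem_span_linearForm_prod (fun Q hQ => cross_rep_ne_zero (hne Q hQ))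
        (fun Q hQ R hR hQR => hK.triple_product_ne_zero (by simp) (by simp [hQ]) (by simp [hR])
          (hne Q hQ) (hne R hR) hQR) fun Q hQ => ?_
      have hQ' : H - h Q ∈ coneIdeal (P.rep ⨯₃ Q.rep) :=
        Ideal.mem_of_dvd _ (hH Q hQ) (linearForm_mem_coneIdeal.2 (dot_cross_self _ _))
      simpa using Ideal.sub_mem _ hQ' (hcompat P hP Q (hmem Q hQ) (hne Q hQ))
    obtain ⟨A, B, hAB⟩ := Ideal.mem_span_pair.1 hHP
    refine ⟨H - B * ∏ Q ∈ K, linearForm Q.rep, fun Q hQ => ?_⟩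
    rcases Finset.mem_insert.1 hQ with rfl | hQ
    · exact ⟨A, by linear_combination -hAB⟩
    · rw [sub_right_comm]
      exact dvd_sub (hH Q hQ) (Dvd.dvd.mul_left (Finset.dvd_prod_of_mem _ hQ) _)

lemma prod_linearForm_dvd {K : Finset (PGPoint F 2)} {Y : MvPolynomial (Fin 3) F}
    (h : ∀ P ∈ K, linearForm P.rep ∣ Y) : ∏ P ∈ K, linearForm P.rep ∣ Y := by
  refine Finset.prod_dvd_of_isRelPrime (fun P _ Q _ hPQ => ?_) h
  exact (prime_linearForm P.rep_nonzero).irreducible.isRelPrime_iff_not_dvd.2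
    (linearForm_not_dvd (cross_rep_ne_zero hPQ))

lemma eq_zero_of_triple_product_ne_zero {x y z v : Fin 3 → F} (h : x ⬝ᵥ (y ⨯₃ z) ≠ 0)
    (hx : v ⬝ᵥ x = 0) (hy : v ⬝ᵥ y = 0) (hz : v ⬝ᵥ z = 0) : v = 0 := by
  rw [triple_product_eq_det] at h
  refine eq_zero_of_mulVec_eq_zero h ?_
  ext i
  change _ ⬝ᵥ v = 0
  rw [dotProduct_comm]
  fin_cases i
  exacts [hx, hy, hz]

lemma cross_dotProduct (x y z : Fin 3 → F) : (x ⨯₃ y) ⬝ᵥ z = x ⬝ᵥ (y ⨯₃ z) := by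
  rw [dotProduct_comm, triple_product_permutation]

lemma exists_rep_cross_eq_smul [DecidableEq F] {P Q : PGPoint F 2} (h : P ≠ Q) :
    ∃ a : F, a ≠ 0 ∧ (P.cross Q).rep = a • (P.rep ⨯₃ Q.rep) := by
  obtain ⟨a, ha⟩ := Projectivization.exists_smul_eq_mk_rep F _ (cross_rep_ne_zero h)
  refine ⟨a, a.ne_zero, ?_⟩
  rw [← Projectivization.cross_mk_of_cross_ne_zero P.rep_nonzero Q.rep_nonzero, P.mk_rep,
    Q.mk_rep] at ha
  exact ha.symm

lemma cross_rep_dotProduct_eq_zero_iff [DecidableEq F] {P Q : PGPoint F 2} (h : P ≠ Q)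
    (R : PGPoint F 2) :
    (P.cross Q).rep ⬝ᵥ R.rep = 0 ↔ P.rep ⬝ᵥ (Q.rep ⨯₃ R.rep) = 0 := by
  obtain ⟨a, ha, hrep⟩ := exists_rep_cross_eq_smul h
  rw [hrep, smul_dotProduct, smul_eq_zero_iff_right ha, cross_dotProduct]

lemma eq_cross_of_dotProduct_eq_zero [DecidableEq F] {m P Q : PGPoint F 2} (h : P ≠ Q)
    (hP : m.rep ⬝ᵥ P.rep = 0) (hQ : m.rep ⬝ᵥ Q.rep = 0) : m = P.cross Q := by
  obtain ⟨a, -, hrep⟩ := exists_rep_cross_eq_smul h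
  rw [← m.mk_rep, ← (P.cross Q).mk_rep, Projectivization.mk_eq_mk_iff_crossProduct_eq_zero, hrep,
    map_smul, cross_cross_eq_smul_sub_smul', hQ, dotProduct_comm, hP, zero_smul, zero_smul,
    sub_zero, smul_zero]

lemma bijOn_dotProduct_div {x y z : Fin 3 → F} (h : x ⬝ᵥ (y ⨯₃ z) ≠ 0) :
    Set.BijOn (fun m : PGPoint F 2 => (m.rep ⬝ᵥ y) / (m.rep ⬝ᵥ z))
      {m | m.rep ⬝ᵥ x = 0 ∧ m.rep ⬝ᵥ y ≠ 0 ∧ m.rep ⬝ᵥ z ≠ 0} {u | u ≠ 0} := by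
  refine ⟨fun m hm => div_ne_zero hm.2.1 hm.2.2, fun m hm m' hm' hmm' => ?_, fun u hu => ?_⟩
  · replace hmm' := (div_eq_div_iff hm.2.2 hm'.2.2).1 hmm'
    have hv : (m'.rep ⬝ᵥ z) • m.rep - (m.rep ⬝ᵥ z) • m'.rep = 0 := by
      refine eq_zero_of_triple_product_ne_zero h ?_ ?_ ?_
      · simp [sub_dotProduct, hm.1, hm'.1]
      · simp only [sub_dotProduct, smul_dotProduct, smul_eq_mul]
        linear_combination hmm'
      · simp [sub_dotProduct, mul_comm]
    rw [← m.mk_rep, ← m'.mk_rep, Projectivization.mk_eq_mk_iff']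
    exact ⟨(m.rep ⬝ᵥ z) / (m'.rep ⬝ᵥ z), by
      rw [div_eq_inv_mul, ← smul_smul, ← sub_eq_zero.1 hv, inv_smul_smul₀ hm'.2.2]⟩
  · set v := x ⨯₃ (y - u • z)
    have hvx : v ⬝ᵥ x = 0 := by rw [dotProduct_comm, dot_self_cross]
    have hvz : v ⬝ᵥ z = x ⬝ᵥ (y ⨯₃ z) := by
      rw [cross_dotProduct, map_sub, LinearMap.sub_apply, map_smul, LinearMap.smul_apply,
        cross_self, smul_zero, sub_zero]
    have hvy : v ⬝ᵥ y = u * (x ⬝ᵥ (y ⨯₃ z)) := by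
      rw [cross_dotProduct, map_sub, LinearMap.sub_apply, map_smul, LinearMap.smul_apply,
        cross_self, zero_sub, ← smul_neg, cross_anticomm, dotProduct_smul, smul_eq_mul]
    have hv : v ≠ 0 := by
      intro hv
      exact h (by rw [← hvz, hv, zero_dotProduct])
    obtain ⟨a, ha⟩ := Projectivization.exists_smul_eq_mk_rep F v hv
    refine ⟨Projectivization.mk F v hv, ?_, ?_⟩
    · simpa [← ha, hvx, hvy, hvz, h, Units.smul_def] using hu
    · simp only [← ha, hvy, hvz, Units.smul_def, smul_dotProduct, smul_eq_mul]
      field_simp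

lemma injOn_cross [DecidableEq F] [DecidableEq (PGPoint F 2)]
    {K : Finset (PGPoint F 2)} (hK : IsCap (K : Set (PGPoint F 2)))
    {P : PGPoint F 2} (hP : P ∈ K) : Set.InjOn P.cross (K.erase P : Finset (PGPoint F 2)) := by
  intro Q hQ R hR hQR
  simp only [Finset.coe_erase, Set.mem_sdiff, Finset.mem_coe, Set.mem_singleton_iff] at hQ hR
  by_contra hne
  refine hK.triple_product_ne_zero hP hQ.1 hR.1 (Ne.symm hQ.2) (Ne.symm hR.2) hne ?_
  rw [← cross_rep_dotProduct_eq_zero_iff (Ne.symm hQ.2), hQR,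
    cross_rep_dotProduct_eq_zero_iff (Ne.symm hR.2), cross_self, dotProduct_zero]

lemma IsCap.prod_triple_product_ne_zero [DecidableEq (PGPoint F 2)] {K s : Finset (PGPoint F 2)}
    (hK : IsCap (K : Set (PGPoint F 2))) {P Q : PGPoint F 2} (hP : P ∈ K) (hQ : Q ∈ K)
    (h : P ≠ Q) (hs : s ⊆ (K.erase P).erase Q) : ∏ S ∈ s, P.rep ⬝ᵥ (S.rep ⨯₃ Q.rep) ≠ 0 := by
  refine Finset.prod_ne_zero_iff.2 fun S hS => ?_
  have hS := hs hS
  simp only [Finset.mem_erase] at hS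
  exact hK.triple_product_ne_zero hP hS.2.2 hQ hS.2.1.symm h hS.1

lemma prod_triple_product_comm [CharP F 2] (s : Finset (PGPoint F 2)) (P Q : PGPoint F 2) :
    ∏ S ∈ s, P.rep ⬝ᵥ (S.rep ⨯₃ Q.rep) = ∏ S ∈ s, Q.rep ⬝ᵥ (S.rep ⨯₃ P.rep) := by
  refine Finset.prod_congr rfl fun S _ => ?_
  rw [triple_product_permutation, triple_product_permutation, ← cross_anticomm, dotProduct_neg,
    CharTwo.neg_eq]

lemma prod_nonzero_eq_neg_one [Fintype F] [DecidableEq F] : ∏ u : F with u ≠ 0, u = -1 := by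
  rw [← Units.val_one, ← Units.val_neg, ← FiniteField.prod_univ_units_id_eq_neg_one (K := F),
    Units.coe_prod, Fintype.prod_equiv unitsEquivNeZero (fun u : Fˣ => (u : F)) (fun u => (u : F))
      fun _ => rfl]
  exact Finset.prod_subtype _ (by simp) _

lemma eval_prod_linearForm_cross {ι : Type*} {T : Finset ι} {m : ι → Fin 3 → F}
    {c P : Fin 3 → F} (hc : c ⬝ᵥ P = 1) (hm : ∀ i ∈ T, m i ⬝ᵥ P = 0) (Q : Fin 3 → F) :
    eval (P ⨯₃ Q) (∏ i ∈ T, linearForm (c ⨯₃ m i)) = ∏ i ∈ T, m i ⬝ᵥ Q := by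
  rw [map_prod]
  refine Finset.prod_congr rfl fun i hi => ?_
  rw [eval_linearForm, cross_dot_cross, hc, hm i hi, one_mul, mul_zero, sub_zero]

lemma cross_cross_of_dotProduct_eq {c p m : Fin 3 → F} (hc : c ⬝ᵥ p = 1) (hm : m ⬝ᵥ p = 0) :
    p ⨯₃ (c ⨯₃ m) = -m := by
  rw [cross_cross_eq_smul_sub_smul', hc, dotProduct_comm, hm, zero_smul, zero_sub, one_smul]

lemma dotProduct_cross_ne_zero {c p m n : Fin 3 → F} (hc : c ⬝ᵥ p = 1) (hm : m ⬝ᵥ p = 0)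
    (hn : n ⬝ᵥ p = 0) (hmn : m ⨯₃ n ≠ 0) : c ⬝ᵥ (m ⨯₃ n) ≠ 0 := by
  contrapose! hmn
  have hp : p ⨯₃ (m ⨯₃ n) = 0 := by
    rw [cross_cross_eq_smul_sub_smul', hm, dotProduct_comm, hn, zero_smul, zero_smul, sub_zero]
  have hcp := cross_cross_eq_smul_sub_smul' c p (m ⨯₃ n)
  rw [hp, map_zero, hmn, zero_smul, dotProduct_comm, hc, one_smul, zero_sub] at hcp
  exact neg_eq_zero.1 hcp.symm

lemma cross_cross_cross_self_left (c m n : Fin 3 → F) :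
    (c ⨯₃ m) ⨯₃ (c ⨯₃ n) = (c ⬝ᵥ (m ⨯₃ n)) • c := by
  rw [cross_cross_eq_smul_sub_smul', dot_self_cross, zero_smul, sub_zero, cross_dotProduct,
    triple_product_permutation, triple_product_permutation]

section FinitePlane

variable [Fintype F]

/-- The tangent lines of `K` at `P`. A line is encoded by its dual point `m`, so that `Q` lies on
it iff `m.rep ⬝ᵥ Q.rep = 0`. -/
noncomputable def tangentLines (K : Finset (PGPoint F 2)) (P : PGPoint F 2) :
    Finset (PGPoint F 2) :=
  (Set.toFinite {m : PGPoint F 2 |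
    m.rep ⬝ᵥ P.rep = 0 ∧ ∀ Q ∈ K, Q ≠ P → m.rep ⬝ᵥ Q.rep ≠ 0}).toFinset

lemma mem_tangentLines {K : Finset (PGPoint F 2)} {P m : PGPoint F 2} :
    m ∈ tangentLines K P ↔ m.rep ⬝ᵥ P.rep = 0 ∧ ∀ Q ∈ K, Q ≠ P → m.rep ⬝ᵥ Q.rep ≠ 0 := by
  simp [tangentLines]

lemma prod_tangentLines_ne_zero {K : Finset (PGPoint F 2)} {P Q : PGPoint F 2} (hQ : Q ∈ K)
    (h : P ≠ Q) : ∏ m ∈ tangentLines K P, m.rep ⬝ᵥ Q.rep ≠ 0 :=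
  Finset.prod_ne_zero_iff.2 fun _ hm => (mem_tangentLines.1 hm).2 Q hQ h.symm

lemma toFinset_pencil_eq [DecidableEq F] [DecidableEq (PGPoint F 2)] {K : Finset (PGPoint F 2)}
    (hK : IsCap (K : Set (PGPoint F 2))) {P Q R : PGPoint F 2} (hP : P ∈ K) (hQ : Q ∈ K)
    (hR : R ∈ K) (hPQ : P ≠ Q) (hPR : P ≠ R) :
    (Set.toFinite {m : PGPoint F 2 |
      m.rep ⬝ᵥ P.rep = 0 ∧ m.rep ⬝ᵥ Q.rep ≠ 0 ∧ m.rep ⬝ᵥ R.rep ≠ 0}).toFinset =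
    tangentLines K P ∪ (((K.erase P).erase Q).erase R).image P.cross := by
  ext m
  simp only [Set.Finite.mem_toFinset, Set.mem_ofPred_eq, Finset.mem_union, mem_tangentLines,
    Finset.mem_image, Finset.mem_erase]
  constructor
  · rintro ⟨hmP, hmQ, hmR⟩
    by_contra! hcon
    obtain ⟨S, hS, hSP, hmS⟩ := hcon.1 hmP
    exact hcon.2 S ⟨fun h => hmR (h ▸ hmS), fun h => hmQ (h ▸ hmS), hSP, hS⟩
      (eq_cross_of_dotProduct_eq_zero hSP.symm hmP hmS).symm
  · rintro (⟨hmP, hm⟩ | ⟨S, ⟨hSR, hSQ, hSP, hS⟩, rfl⟩)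
    · exact ⟨hmP, hm Q hQ hPQ.symm, hm R hR hPR.symm⟩
    · simp only [ne_eq, cross_rep_dotProduct_eq_zero_iff hSP.symm]
      exact ⟨by rw [triple_product_permutation, cross_self, dotProduct_zero],
        hK.triple_product_ne_zero hP hS hQ hSP.symm hPQ hSQ,
        hK.triple_product_ne_zero hP hS hR hSP.symm hPR hSR⟩

lemma disjoint_tangentLines_image_cross [DecidableEq F] [DecidableEq (PGPoint F 2)]
    (K : Finset (PGPoint F 2)) (P Q R : PGPoint F 2) :
    Disjoint (tangentLines K P) ((((K.erase P).erase Q).erase R).image P.cross) := by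
  rw [Finset.disjoint_left]
  intro m hm hm'
  obtain ⟨S, hS, rfl⟩ := Finset.mem_image.1 hm'
  simp only [Finset.mem_erase] at hS
  obtain ⟨-, -, hSP, hS⟩ := hS
  refine (mem_tangentLines.1 hm).2 S hS hSP ?_
  rw [cross_rep_dotProduct_eq_zero_iff hSP.symm, cross_self, dotProduct_zero]

lemma card_tangentLines_add_card {K : Finset (PGPoint F 2)} (hK : IsCap (K : Set (PGPoint F 2)))
    (hcard : 3 ≤ K.card) {P : PGPoint F 2} (hP : P ∈ K) :
    (tangentLines K P).card + K.card = Fintype.card F + 2 := by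
  classical
  obtain ⟨Q, hQ, R, hR, hQR⟩ := Finset.one_lt_card.1
    (show 1 < (K.erase P).card by rw [Finset.card_erase_of_mem hP]; omega)
  obtain ⟨hQP, hQ⟩ := Finset.mem_erase.1 hQ
  obtain ⟨hRP, hR⟩ := Finset.mem_erase.1 hR
  have hbij := bijOn_dotProduct_div
    (hK.triple_product_ne_zero hP hQ hR hQP.symm hRP.symm hQR)
  have hpencil := congrArg Finset.card (toFinset_pencil_eq hK hP hQ hR hQP.symm hRP.symm)
  rw [Finset.card_union_of_disjoint (disjoint_tangentLines_image_cross K P Q R),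
    Finset.card_image_of_injOn ((injOn_cross hK hP).mono (Finset.coe_subset.2
      ((Finset.erase_subset _ _).trans (Finset.erase_subset _ _)))),
    Finset.card_erase_of_mem (by simp [hR, hRP, hQR.symm]), Finset.card_erase_of_mem (by simp [*]),
    Finset.card_erase_of_mem hP] at hpencil
  have hunits : ({u : F | u ≠ 0} : Set F).ncard = Fintype.card F - 1 := by
    rw [← Nat.card_eq_fintype_card, ← Set.ncard_univ,
      ← Set.ncard_sdiff_singleton_of_mem (Set.mem_univ 0)]
    congr 1
    ext
    simp
  rw [← Set.ncard_eq_toFinset_card, hbij.ncard_eq, hunits] at hpencil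
  have := Fintype.one_lt_card (α := F)
  omega

lemma prod_tangentLines_mul_prod_eq_neg_one [DecidableEq (PGPoint F 2)]
    {K : Finset (PGPoint F 2)} (hK : IsCap (K : Set (PGPoint F 2))) {P Q R : PGPoint F 2}
    (hP : P ∈ K) (hQ : Q ∈ K) (hR : R ∈ K) (hPQ : P ≠ Q) (hPR : P ≠ R) (hQR : Q ≠ R) :
    (∏ m ∈ tangentLines K P, (m.rep ⬝ᵥ Q.rep) / (m.rep ⬝ᵥ R.rep)) *
      ∏ S ∈ ((K.erase P).erase Q).erase R,
        (P.rep ⬝ᵥ (S.rep ⨯₃ Q.rep)) / (P.rep ⬝ᵥ (S.rep ⨯₃ R.rep)) = -1 := by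
  classical
  have hbij := bijOn_dotProduct_div (hK.triple_product_ne_zero hP hQ hR hPQ hPR hQR)
  have hpencil : ∏ m ∈ (Set.toFinite {m : PGPoint F 2 |
      m.rep ⬝ᵥ P.rep = 0 ∧ m.rep ⬝ᵥ Q.rep ≠ 0 ∧ m.rep ⬝ᵥ R.rep ≠ 0}).toFinset,
      (m.rep ⬝ᵥ Q.rep) / (m.rep ⬝ᵥ R.rep) = -1 := by
    rw [← prod_nonzero_eq_neg_one]
    refine Finset.prod_bij (fun m _ => (m.rep ⬝ᵥ Q.rep) / (m.rep ⬝ᵥ R.rep)) (fun m hm => ?_)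
      (fun m hm m' hm' h => ?_) (fun u hu => ?_) (fun _ _ => rfl)
    · simpa using hbij.mapsTo ((Set.Finite.mem_toFinset _).1 hm)
    · exact hbij.injOn ((Set.Finite.mem_toFinset _).1 hm) ((Set.Finite.mem_toFinset _).1 hm') h
    · obtain ⟨m, hm, rfl⟩ := hbij.surjOn (show u ∈ {u : F | u ≠ 0} by simpa using hu)
      exact ⟨m, (Set.Finite.mem_toFinset _).2 hm, rfl⟩
  rw [toFinset_pencil_eq hK hP hQ hR hPQ hPR,
    Finset.prod_union (disjoint_tangentLines_image_cross K P Q R),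
    Finset.prod_image ((injOn_cross hK hP).mono (Finset.coe_subset.2
      ((Finset.erase_subset _ _).trans (Finset.erase_subset _ _))))] at hpencil
  rw [← hpencil]
  congr 1
  refine Finset.prod_congr rfl fun S hS => ?_
  obtain ⟨a, ha, hrep⟩ := exists_rep_cross_eq_smul (Ne.symm (Finset.ne_of_mem_erase
    (Finset.mem_of_mem_erase (Finset.mem_of_mem_erase hS))))
  simp only [hrep, smul_dotProduct, smul_eq_mul, mul_div_mul_left _ _ ha]
  rw [cross_dotProduct, cross_dotProduct]

lemma prod_tangentLines_mul_prod_triple_product_eq [DecidableEq (PGPoint F 2)]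
    {K : Finset (PGPoint F 2)} (hK : IsCap (K : Set (PGPoint F 2))) {P Q R : PGPoint F 2}
    (hP : P ∈ K) (hQ : Q ∈ K) (hR : R ∈ K) (hPQ : P ≠ Q) (hPR : P ≠ R) :
    (∏ m ∈ tangentLines K P, m.rep ⬝ᵥ Q.rep) *
        ∏ S ∈ (K.erase P).erase Q, P.rep ⬝ᵥ (S.rep ⨯₃ Q.rep) =
      (∏ m ∈ tangentLines K P, m.rep ⬝ᵥ R.rep) *
        ∏ S ∈ (K.erase P).erase R, P.rep ⬝ᵥ (S.rep ⨯₃ R.rep) := by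
  obtain rfl | hQR := eq_or_ne Q R
  · rfl
  have hprod := prod_tangentLines_mul_prod_eq_neg_one hK hP hQ hR hPQ hPR hQR
  have hT := prod_tangentLines_ne_zero hR hPR
  have hD := hK.prod_triple_product_ne_zero (s := ((K.erase P).erase Q).erase R) hP hR hPR
    (by rw [Finset.erase_right_comm]; exact Finset.erase_subset _ _)
  have hswap : P.rep ⬝ᵥ (R.rep ⨯₃ Q.rep) = -(P.rep ⬝ᵥ (Q.rep ⨯₃ R.rep)) := by
    rw [← cross_anticomm, dotProduct_neg]
  rw [Finset.prod_div_distrib, Finset.prod_div_distrib, div_mul_div_comm,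
    div_eq_iff (mul_ne_zero hT hD)] at hprod
  rw [← Finset.mul_prod_erase ((K.erase P).erase Q) _ (by simp [*, hQR.symm, hPR.symm] : R ∈ _),
    ← Finset.mul_prod_erase ((K.erase P).erase R) _ (by simp [*, hPQ.symm] : Q ∈ _),
    Finset.erase_right_comm (a := R), hswap]
  linear_combination (-(P.rep ⬝ᵥ (Q.rep ⨯₃ R.rep))) * hprod

/-- Segre's lemma of tangents. -/
lemma IsCap.exists_weights_prod_tangentLines_comm [CharP F 2] {K : Finset (PGPoint F 2)}
    (hK : IsCap (K : Set (PGPoint F 2))) (hcard : 1 < K.card) :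
    ∃ κ : PGPoint F 2 → F, ∀ P ∈ K, κ P ≠ 0 ∧ ∀ Q ∈ K, P ≠ Q →
      κ P * ∏ m ∈ tangentLines K P, m.rep ⬝ᵥ Q.rep =
        κ Q * ∏ m ∈ tangentLines K Q, m.rep ⬝ᵥ P.rep := by
  classical
  choose R hR hRP using fun P => Finset.exists_mem_ne hcard P
  set μ : PGPoint F 2 → F := fun P => (∏ m ∈ tangentLines K P, m.rep ⬝ᵥ (R P).rep) *
    ∏ S ∈ (K.erase P).erase (R P), P.rep ⬝ᵥ (S.rep ⨯₃ (R P).rep)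
  have hμ : ∀ P ∈ K, μ P ≠ 0 := fun P hP => mul_ne_zero (prod_tangentLines_ne_zero (hR P)
    (hRP P).symm) (hK.prod_triple_product_ne_zero hP (hR P) (hRP P).symm subset_rfl)
  have hμ_eq : ∀ P ∈ K, ∀ Q ∈ K, P ≠ Q → μ P = (∏ m ∈ tangentLines K P, m.rep ⬝ᵥ Q.rep) *
      ∏ S ∈ (K.erase P).erase Q, P.rep ⬝ᵥ (S.rep ⨯₃ Q.rep) := fun P hP Q hQ hPQ =>
    prod_tangentLines_mul_prod_triple_product_eq hK hP (hR P) hQ (hRP P).symm hPQ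
  refine ⟨fun P => (μ P)⁻¹, fun P hP => ⟨inv_ne_zero (hμ P hP), fun Q hQ hPQ => ?_⟩⟩
  rw [inv_mul_eq_div, inv_mul_eq_div, div_eq_div_iff (hμ P hP) (hμ Q hQ), hμ_eq P hP Q hQ hPQ,
    hμ_eq Q hQ P hP hPQ.symm, Finset.erase_right_comm, prod_triple_product_comm _ Q P]
  ring

/-- `IsTangentEnvelope K t Φ` says that `Φ` defines a curve of degree `t` in the dual plane which
meets the dual line of each point `P ∈ K` exactly in the tangent lines of `K` at `P`, each with
multiplicity one (Segre's algebraic envelope). The vector `c` splits off `P`: modulo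
`linearForm P.rep`, the form `linearForm (c ⨯₃ m.rep)` is an equation of the dual point `m`. -/
structure IsTangentEnvelope (K : Finset (PGPoint F 2)) (t : ℕ) (Φ : MvPolynomial (Fin 3) F) :
    Prop where
  isHomogeneous : Φ.IsHomogeneous t
  exists_dvd_sub : ∀ P ∈ K, ∃ c : Fin 3 → F, c ⬝ᵥ P.rep = 1 ∧ ∃ κ : F, κ ≠ 0 ∧
    linearForm P.rep ∣ Φ - C κ * ∏ m ∈ tangentLines K P, linearForm (c ⨯₃ m.rep)

variable {K : Finset (PGPoint F 2)} {t : ℕ} {Φ : MvPolynomial (Fin 3) F}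

lemma IsCap.exists_isTangentEnvelope [CharP F 2] (hK : IsCap (K : Set (PGPoint F 2)))
    (hcard : 1 < K.card) (ht : ∀ P ∈ K, (tangentLines K P).card = t) :
    ∃ Φ, IsTangentEnvelope K t Φ := by
  obtain ⟨κ, hκ⟩ := hK.exists_weights_prod_tangentLines_comm hcard
  choose c hc using fun P : PGPoint F 2 => exists_dotProduct_eq_one P.rep_nonzero
  set h : PGPoint F 2 → MvPolynomial (Fin 3) F :=
    fun P => C (κ P) * ∏ m ∈ tangentLines K P, linearForm (c P ⨯₃ m.rep)
  have hhom : ∀ P ∈ K, (h P).IsHomogeneous t := by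
    intro P hP
    have hprod := IsHomogeneous.prod (tangentLines K P) (fun m => linearForm (c P ⨯₃ m.rep))
      (fun _ => 1) fun m _ => isHomogeneous_linearForm _
    rw [Finset.sum_const, smul_eq_mul, mul_one, ht P hP] at hprod
    simpa using (isHomogeneous_C (Fin 3) (κ P)).mul hprod
  have heval : ∀ P Q : PGPoint F 2, eval (P.rep ⨯₃ Q.rep) (h P) =
      κ P * ∏ m ∈ tangentLines K P, m.rep ⬝ᵥ Q.rep := by
    intro P Q
    rw [map_mul, eval_C, eval_prod_linearForm_cross (hc P) fun m hm => (mem_tangentLines.1 hm).1]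
  obtain ⟨H, hH⟩ := hK.exists_glue h fun P hP Q hQ hPQ => by
    have hswap : P.rep ⨯₃ Q.rep = Q.rep ⨯₃ P.rep := by
      rw [← cross_anticomm, CharTwo.neg_eq]
    rw [mem_coneIdeal_iff ((hhom P hP).sub (hhom Q hQ)), map_sub, sub_eq_zero, heval P Q, hswap,
      heval Q P, (hκ P hP).2 Q hQ hPQ]
  refine ⟨homogeneousComponent t H, homogeneousComponent_isHomogeneous t H,
    fun P hP => ⟨c P, hc P, κ P, (hκ P hP).1, ?_⟩⟩
  have hdvd := dvd_homogeneousComponent (isHomogeneous_linearForm P.rep) (hH P hP) t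
  rwa [map_sub, homogeneousComponent_eq_self (hhom P hP)] at hdvd

lemma IsTangentEnvelope.eval_eq_zero (hΦ : IsTangentEnvelope K t Φ) {P m : PGPoint F 2}
    (hP : P ∈ K) (hm : m ∈ tangentLines K P) : eval m.rep Φ = 0 := by
  obtain ⟨c, -, κ, -, hdvd⟩ := hΦ.exists_dvd_sub P hP
  have hzero : eval m.rep (linearForm (c ⨯₃ m.rep)) = 0 := by
    rw [eval_linearForm, cross_dotProduct, cross_self, dotProduct_zero]
  have h := map_dvd (eval m.rep) hdvd
  rw [eval_linearForm, dotProduct_comm, (mem_tangentLines.1 hm).1, zero_dvd_iff, map_sub, map_mul,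
    map_prod, Finset.prod_eq_zero hm hzero, mul_zero, sub_zero] at h
  exact h

lemma IsTangentEnvelope.eval_cross_ne_zero (hΦ : IsTangentEnvelope K t Φ) {P Q : PGPoint F 2}
    (hP : P ∈ K) (hQ : Q ∈ K) (hPQ : P ≠ Q) : eval (P.rep ⨯₃ Q.rep) Φ ≠ 0 := by
  obtain ⟨c, hc, κ, hκ, hdvd⟩ := hΦ.exists_dvd_sub P hP
  have h := map_dvd (eval (P.rep ⨯₃ Q.rep)) hdvd
  rw [eval_linearForm, dot_self_cross, zero_dvd_iff, map_sub, map_mul, eval_C,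
    eval_prod_linearForm_cross hc fun m hm => (mem_tangentLines.1 hm).1, sub_eq_zero] at h
  rw [h]
  exact mul_ne_zero hκ (prod_tangentLines_ne_zero hQ hPQ)

lemma IsTangentEnvelope.mem_span_linearForm_of_forall_mem_coneIdeal (hΦ : IsTangentEnvelope K t Φ)
    {P : PGPoint F 2} (hP : P ∈ K) {Y : MvPolynomial (Fin 3) F}
    (hY : ∀ m ∈ tangentLines K P, Y ∈ coneIdeal m.rep) :
    Y ∈ Ideal.span {linearForm P.rep, Φ} := by
  obtain ⟨c, hc, κ, hκ, G, hG⟩ := hΦ.exists_dvd_sub P hP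
  have hcm : ∀ m ∈ tangentLines K P, P.rep ⨯₃ (c ⨯₃ m.rep) = (-1 : F) • m.rep := fun m hm => by
    rw [cross_cross_of_dotProduct_eq hc (mem_tangentLines.1 hm).1, neg_one_smul]
  have hspan : Y ∈ Ideal.span
      {linearForm P.rep, ∏ m ∈ tangentLines K P, linearForm (c ⨯₃ m.rep)} := by
    refine mem_span_linearForm_prod (fun m hm => ?_) (fun m hm n hn hmn => ?_) fun m hm => ?_
    · rw [hcm m hm]
      exact smul_ne_zero (neg_ne_zero.2 one_ne_zero) m.rep_nonzero
    · rw [cross_cross_cross_self_left, dotProduct_smul, dotProduct_comm P.rep, hc,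
        smul_eq_mul, mul_one]
      exact dotProduct_cross_ne_zero hc (mem_tangentLines.1 hm).1 (mem_tangentLines.1 hn).1
        (cross_rep_ne_zero hmn)
    · rw [hcm m hm, coneIdeal_smul (neg_ne_zero.2 one_ne_zero)]
      exact hY m hm
  obtain ⟨A, B, rfl⟩ := Ideal.mem_span_pair.1 hspan
  have hκC : (C κ⁻¹ * C κ : MvPolynomial (Fin 3) F) = 1 := by
    rw [← C_mul, inv_mul_cancel₀ hκ, C_1]
  exact Ideal.mem_span_pair.2 ⟨A - C κ⁻¹ * B * G, C κ⁻¹ * B, by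
    linear_combination C κ⁻¹ * B * hG +
      (B * ∏ m ∈ tangentLines K P, linearForm (c ⨯₃ m.rep)) * hκC⟩

lemma IsTangentEnvelope.isRelPrime_linearForm (hΦ : IsTangentEnvelope K t Φ) {P : PGPoint F 2}
    (hP : P ∈ K) : IsRelPrime (linearForm P.rep) Φ := by
  have hprime := prime_linearForm P.rep_nonzero
  refine hprime.irreducible.isRelPrime_iff_not_dvd.2 fun hdvd => ?_
  obtain ⟨c, hc, κ, hκ, hsub⟩ := hΦ.exists_dvd_sub P hP
  rcases hprime.dvd_or_dvd ((dvd_sub_right hdvd).1 hsub) with h | h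
  · exact hprime.not_isUnit (isUnit_of_dvd_unit h ((isUnit_iff_ne_zero.2 hκ).map C))
  · obtain ⟨m, hm, h⟩ := (hprime.dvd_finsetProd_iff _).1 h
    refine linearForm_not_dvd ?_ h
    rw [cross_cross_of_dotProduct_eq hc (mem_tangentLines.1 hm).1, neg_ne_zero]
    exact m.rep_nonzero

lemma IsTangentEnvelope.isRelPrime_prod_linearForm (hΦ : IsTangentEnvelope K t Φ) (n : ℕ) :
    IsRelPrime Φ ((∏ P ∈ K, linearForm P.rep) ^ n) :=
  (IsRelPrime.prod_left fun _ hP => hΦ.isRelPrime_linearForm hP).pow_left.symm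

/-- Max Noether's `AF + BG` condition for the curves `Φ` and `∏ P ∈ K, linearForm P.rep`, which
meet transversally in the tangent lines of `K`. -/
lemma IsTangentEnvelope.mem_span_prod_of_forall_mem_coneIdeal (hΦ : IsTangentEnvelope K t Φ)
    (hK : IsCap (K : Set (PGPoint F 2))) {Y : MvPolynomial (Fin 3) F}
    (hY : ∀ P ∈ K, ∀ m ∈ tangentLines K P, Y ∈ coneIdeal m.rep) :
    Y ∈ Ideal.span {Φ, ∏ P ∈ K, linearForm P.rep} := by
  have hlocal : ∀ P, ∃ B, P ∈ K → linearForm P.rep ∣ Y - B * Φ := by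
    intro P
    by_cases hP : P ∈ K
    · obtain ⟨A, B, hAB⟩ := Ideal.mem_span_pair.1
        (hΦ.mem_span_linearForm_of_forall_mem_coneIdeal hP (hY P hP))
      exact ⟨B, fun _ => ⟨A, by linear_combination -hAB⟩⟩
    · exact ⟨0, fun h => absurd h hP⟩
  choose b hb using hlocal
  obtain ⟨B, hB⟩ := hK.exists_glue b fun P hP Q hQ hPQ => by
    have hΦPQ : Φ ∉ coneIdeal (P.rep ⨯₃ Q.rep) := by
      rw [mem_coneIdeal_iff hΦ.isHomogeneous]
      exact hΦ.eval_cross_ne_zero hP hQ hPQ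
    have hYP : Y - b P * Φ ∈ coneIdeal (P.rep ⨯₃ Q.rep) :=
      Ideal.mem_of_dvd _ (hb P hP) (linearForm_mem_coneIdeal.2 (dot_self_cross _ _))
    have hYQ : Y - b Q * Φ ∈ coneIdeal (P.rep ⨯₃ Q.rep) :=
      Ideal.mem_of_dvd _ (hb Q hQ) (linearForm_mem_coneIdeal.2 (dot_cross_self _ _))
    have hmul : (b P - b Q) * Φ ∈ coneIdeal (P.rep ⨯₃ Q.rep) := by
      convert Ideal.sub_mem _ hYQ hYP using 1
      ring
    exact ((isPrime_coneIdeal _).mem_or_mem hmul).resolve_right hΦPQ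
  obtain ⟨A, hA⟩ := prod_linearForm_dvd (K := K) (Y := Y - B * Φ) fun P hP => by
    have h := dvd_sub (hb P hP) (Dvd.dvd.mul_right (hB P hP) Φ)
    convert h using 1
    ring
  exact Ideal.mem_span_pair.2 ⟨B, A, by linear_combination -hA⟩

lemma prod_linearForm_mem_coneIdeal {P m : PGPoint F 2} (hP : P ∈ K)
    (hm : m ∈ tangentLines K P) : ∏ P ∈ K, linearForm P.rep ∈ coneIdeal m.rep :=
  Ideal.mem_of_dvd _ (Finset.dvd_prod_of_mem _ hP)
    (linearForm_mem_coneIdeal.2 (by rw [dotProduct_comm, (mem_tangentLines.1 hm).1]))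

lemma IsTangentEnvelope.mem_span_prod_of_X_pow_mul_mem (hΦ : IsTangentEnvelope K t Φ)
    (hK : IsCap (K : Set (PGPoint F 2))) {Y : MvPolynomial (Fin 3) F}
    (hY : ∀ i, ∃ N, X i ^ N * Y ∈ Ideal.span {Φ, ∏ P ∈ K, linearForm P.rep}) :
    Y ∈ Ideal.span {Φ, ∏ P ∈ K, linearForm P.rep} := by
  refine hΦ.mem_span_prod_of_forall_mem_coneIdeal hK fun P hP m hm => ?_
  obtain ⟨i, hi⟩ := exists_X_notMem_coneIdeal m.rep_nonzero
  obtain ⟨N, hN⟩ := hY i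
  have hle : Ideal.span {Φ, ∏ P ∈ K, linearForm P.rep} ≤ coneIdeal m.rep := by
    rw [Ideal.span_le, Set.insert_subset_iff, Set.singleton_subset_iff]
    exact ⟨(mem_coneIdeal_iff hΦ.isHomogeneous).2 (hΦ.eval_eq_zero hP hm),
      prod_linearForm_mem_coneIdeal hP hm⟩
  exact ((isPrime_coneIdeal _).mem_or_mem (hle hN)).resolve_left
    fun h => hi ((isPrime_coneIdeal _).mem_of_pow_mem _ h)

lemma IsTangentEnvelope.mem_span_pow_of_X_pow_mul_mem (hΦ : IsTangentEnvelope K t Φ)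
    (hK : IsCap (K : Set (PGPoint F 2))) {Y : MvPolynomial (Fin 3) F} {n : ℕ}
    (hY : ∀ i, ∃ N, X i ^ N * Y ∈ Ideal.span {Φ, (∏ P ∈ K, linearForm P.rep) ^ n}) :
    Y ∈ Ideal.span {Φ, (∏ P ∈ K, linearForm P.rep) ^ n} := by
  set L := ∏ P ∈ K, linearForm P.rep
  induction n with
  | zero => exact Ideal.mem_span_pair.2 ⟨0, Y, by ring⟩
  | succ n ih =>
    have hle : Ideal.span {Φ, L ^ (n + 1)} ≤ Ideal.span {Φ, L ^ n} := by
      rw [Ideal.span_le, Set.insert_subset_iff, Set.singleton_subset_iff]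
      exact ⟨Ideal.subset_span (by simp),
        Ideal.mem_of_dvd _ (pow_dvd_pow L n.le_succ) (Ideal.subset_span (by simp))⟩
    obtain ⟨A, B, hAB⟩ := Ideal.mem_span_pair.1 (ih fun i => (hY i).imp fun N hN => hle hN)
    have hB : B ∈ Ideal.span {Φ, L} := by
      refine hΦ.mem_span_prod_of_X_pow_mul_mem hK fun i => ?_
      obtain ⟨N, hN⟩ := hY i
      obtain ⟨A', B', hAB'⟩ := Ideal.mem_span_pair.1 hN
      have hdvd : Φ ∣ X i ^ N * B - B' * L :=
        (hΦ.isRelPrime_prod_linearForm n).dvd_of_dvd_mul_left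
          ⟨A' - X i ^ N * A, by linear_combination X i ^ N * hAB - hAB'⟩
      obtain ⟨E, hE⟩ := hdvd
      exact ⟨N, Ideal.mem_span_pair.2 ⟨E, B', by linear_combination -hE⟩⟩
    obtain ⟨A', B', rfl⟩ := Ideal.mem_span_pair.1 hB
    exact Ideal.mem_span_pair.2 ⟨A + A' * L ^ n, B', by linear_combination hAB⟩

lemma IsTangentEnvelope.dvd_of_X_pow_mul_mem (hΦ : IsTangentEnvelope K t Φ)
    (hK : IsCap (K : Set (PGPoint F 2))) {Y : MvPolynomial (Fin 3) F} {d n : ℕ}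
    (hYd : Y.IsHomogeneous d) (hd : d < K.card * n)
    (hY : ∀ i, ∃ N, X i ^ N * Y ∈ Ideal.span {Φ, (∏ P ∈ K, linearForm P.rep) ^ n}) : Φ ∣ Y := by
  refine dvd_of_mem_span_pair hΦ.isHomogeneous (IsHomogeneous.pow ?_ n) hYd hd
    (hΦ.mem_span_pow_of_X_pow_mul_mem hK hY)
  simpa using IsHomogeneous.prod K (fun P => linearForm P.rep) (fun _ => 1)
    fun P _ => isHomogeneous_linearForm P.rep

lemma aeval_X_pow_card {σ : Type*} (Ψ : MvPolynomial σ F) :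
    aeval (fun i => X i ^ Fintype.card F : σ → MvPolynomial σ F) Ψ = Ψ ^ Fintype.card F := by
  have h := comp_aeval_apply X (FiniteField.frobeniusAlgHom F (MvPolynomial σ F)) Ψ
  simpa [aeval_X_left] using h.symm

lemma IsTangentEnvelope.exists_dvd_frobenius_sub (hΦ : IsTangentEnvelope K t Φ)
    (hK : IsCap (K : Set (PGPoint F 2))) (l : Fin 3) :
    ∃ u : Fin 3 → MvPolynomial (Fin 3) F, ∀ i, Φ ∣ X l * X i ^ Fintype.card F -
      X l ^ Fintype.card F * X i - (∏ P ∈ K, linearForm P.rep) * u i := by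
  have hmem (i : Fin 3) : X l * X i ^ Fintype.card F - X l ^ Fintype.card F * X i ∈
      Ideal.span {Φ, ∏ P ∈ K, linearForm P.rep} := by
    refine hΦ.mem_span_prod_of_forall_mem_coneIdeal hK fun P _ m _ => ?_
    have hhom : (X l * X i ^ Fintype.card F - X l ^ Fintype.card F * X i :
        MvPolynomial (Fin 3) F).IsHomogeneous (1 + Fintype.card F) :=
      ((isHomogeneous_X F l).mul (isHomogeneous_X_pow i _)).sub
        (by simpa [add_comm] using
          (isHomogeneous_X_pow l (Fintype.card F)).mul (isHomogeneous_X F i))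
    rw [mem_coneIdeal_iff hhom]
    simp [FiniteField.pow_card]
  choose A u hu using fun i => Ideal.mem_span_pair.1 (hmem i)
  exact ⟨u, fun i => ⟨A i, by linear_combination -hu i⟩⟩

lemma IsTangentEnvelope.dvd_coeff_lineExpansion_frobenius_of_lt (hΦ : IsTangentEnvelope K t Φ)
    (hK : IsCap (K : Set (PGPoint F 2)))
    (hdeg : ∀ i < t, t + i * (Fintype.card F - 1) < K.card * (i + 1)) {j : ℕ} (hj : j < t) :
    Φ ∣ (lineExpansion Φ X fun i => X i ^ Fintype.card F).coeff j := by
  set Y := lineExpansion Φ X (fun i => X i ^ Fintype.card F : Fin 3 → MvPolynomial (Fin 3) F)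
  induction j using Nat.strong_induction_on with
  | _ j ih =>
    have hY : (Y.coeff j).IsHomogeneous (t + j * (Fintype.card F - 1)) := by
      refine isHomogeneous_coeff_lineExpansion_X hΦ.isHomogeneous (fun i => ?_) j
      rw [add_tsub_cancel_of_le Fintype.card_pos]
      exact isHomogeneous_X_pow i _
    refine hΦ.dvd_of_X_pow_mul_mem hK hY (hdeg j hj) fun l =>
      ⟨Fintype.card F * (t - j) + j, ?_⟩
    obtain ⟨u, hu⟩ := hΦ.exists_dvd_frobenius_sub hK l
    have hmem := mul_coeff_lineExpansion_mem_sup hΦ.isHomogeneous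
      (fun i => Ideal.mem_span_singleton.2 (hu i))
      (Ideal.mem_span_singleton.2
        (aeval_X_pow_card Φ ▸ dvd_pow_self Φ Fintype.card_ne_zero)) hj.le fun i hi =>
          Ideal.mem_span_singleton.2 (ih i hi (hi.trans hj))
    rwa [← Ideal.span_insert, ← pow_mul, ← pow_add] at hmem

lemma add_mul_sub_one_lt_mul_succ {q t k s j : ℕ} (hst : s + 1 = t) (hsk : s + k = q + 1)
    (hsq : s ^ 2 < q) (hq : 2 < q) (hj : j < t) : t + j * (q - 1) < k * (j + 1) := by
  obtain ⟨q, rfl⟩ := Nat.exists_eq_add_of_lt hq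
  obtain rfl : t = s + 1 := hst.symm
  have hkey : j * s + 2 * s < 2 + q + 1 + 2 * j := by
    rcases le_or_gt 2 s with hs | hs
    · nlinarith [Nat.mul_le_mul_left (s - 2) (Nat.lt_succ_iff.1 hj), Nat.sub_add_cancel hs]
    · interval_cases s <;> omega
  have hk : k * (j + 1) + s * (j + 1) = (2 + q + 1 + 1) * (j + 1) := by
    rw [← add_mul, add_comm k s, hsk]
  simp only [Nat.add_sub_cancel]
  nlinarith

lemma IsTangentEnvelope.dvd_coeff_lineExpansion_frobenius (hΦ : IsTangentEnvelope K t Φ)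
    (hK : IsCap (K : Set (PGPoint F 2)))
    (hdeg : ∀ i < t, t + i * (Fintype.card F - 1) < K.card * (i + 1)) {j : ℕ} (hj : j ≤ t) :
    Φ ∣ (lineExpansion Φ X fun i => X i ^ Fintype.card F).coeff j := by
  rcases hj.eq_or_lt with rfl | hlt
  · rw [coeff_self_lineExpansion hΦ.isHomogeneous, aeval_X_pow_card]
    exact dvd_pow_self Φ Fintype.card_ne_zero
  · exact hΦ.dvd_coeff_lineExpansion_frobenius_of_lt hK hdeg hlt

lemma linearForm_pow_card (x : Fin 3 → F) :
    linearForm x ^ Fintype.card F = ∑ i, x i • X i ^ Fintype.card F := by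
  simpa [linearForm_apply] using (aeval_X_pow_card (linearForm x)).symm

lemma IsTangentEnvelope.dotProduct_eval_ne_zero (hΦ : IsTangentEnvelope K t Φ)
    {P m : PGPoint F 2} (hP : P ∈ K) (hm : m ∈ tangentLines K P) {l : Fin 3} (hl : m.rep l ≠ 0)
    {u : Fin 3 → MvPolynomial (Fin 3) F}
    (hu : ∀ i, Φ ∣ X l * X i ^ Fintype.card F - X l ^ Fintype.card F * X i -
      (∏ P ∈ K, linearForm P.rep) * u i) :
    P.rep ⬝ᵥ (fun i => eval m.rep (u i)) ≠ 0 := by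
  obtain ⟨G, hG⟩ := Finset.dvd_prod_of_mem (fun P : PGPoint F 2 => linearForm P.rep) hP
  have hsum : Φ ∣ linearForm P.rep * (X l * linearForm P.rep ^ (Fintype.card F - 1) -
      X l ^ Fintype.card F - G * ∑ i, P.rep i • u i) := by
    convert Finset.dvd_sum fun i (_ : i ∈ Finset.univ) => dvd_smul_of_dvd (P.rep i) (hu i) using 1
    simp only [smul_sub, Finset.sum_sub_distrib, mul_sub, ← mul_smul_comm, ← Finset.mul_sum,
      ← linearForm_apply, hG]
    rw [mul_left_comm, mul_pow_sub_one Fintype.card_ne_zero, linearForm_pow_card]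
    ring
  have heval := map_dvd (eval m.rep)
    ((hΦ.isRelPrime_linearForm hP).symm.dvd_of_dvd_mul_left hsum)
  have hcard : Fintype.card F - 1 ≠ 0 := (Nat.sub_pos_of_lt Fintype.one_lt_card).ne'
  rw [hΦ.eval_eq_zero hP hm, zero_dvd_iff] at heval
  intro hzero
  rw [dotProduct] at hzero
  apply hl
  simpa [eval_linearForm, dotProduct_comm P.rep, (mem_tangentLines.1 hm).1, hcard,
    FiniteField.pow_card, smul_eval, hzero] using heval

lemma IsTangentEnvelope.exists_eval_smul_add_smul_eq_zero (hΦ : IsTangentEnvelope K t Φ)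
    (hK : IsCap (K : Set (PGPoint F 2)))
    (hdeg : ∀ i < t, t + i * (Fintype.card F - 1) < K.card * (i + 1))
    {P m : PGPoint F 2} (hP : P ∈ K) (hm : m ∈ tangentLines K P) :
    ∃ v : Fin 3 → F, P.rep ⬝ᵥ v ≠ 0 ∧ ∀ a b : F, eval (a • m.rep + b • v) Φ = 0 := by
  obtain ⟨l, hl⟩ := Function.ne_iff.1 m.rep_nonzero
  obtain ⟨u, hu⟩ := hΦ.exists_dvd_frobenius_sub hK l
  have hdvd : ∀ j ≤ t, Φ ∣ (lineExpansion Φ X u).coeff j := fun j hj => by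
    refine (hΦ.isRelPrime_prod_linearForm j).dvd_of_dvd_mul_left ?_
    rw [← Ideal.mem_span_singleton]
    exact pow_mul_coeff_lineExpansion_mem hΦ.isHomogeneous
      (fun i => Ideal.mem_span_singleton.2 (hu i)) hj fun i hi =>
        Ideal.mem_span_singleton.2 (hΦ.dvd_coeff_lineExpansion_frobenius hK hdeg (hi.trans hj))
  have hcoeff : ∀ j ≤ t, (lineExpansion Φ m.rep fun i => eval m.rep (u i)).coeff j = 0 := by
    intro j hj
    have h := map_dvd (aeval m.rep) (hdvd j hj)
    rw [← coeff_lineExpansion_comp, aeval_eq_eval, hΦ.eval_eq_zero hP hm, zero_dvd_iff] at h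
    simpa [Function.comp_def] using h
  refine ⟨_, hΦ.dotProduct_eval_ne_zero hP hm hl hu, fun a b => ?_⟩
  rw [← aeval_eq_eval, aeval_smul_add_smul hΦ.isHomogeneous, Finset.sum_eq_zero]
  intro j hj
  rw [hcoeff j (Finset.mem_range_succ_iff.1 hj), mul_zero]

lemma IsTangentEnvelope.exists_triple_product_ne_zero (hΦ : IsTangentEnvelope K t Φ)
    {m v : Fin 3 → F} (hmv : m ⨯₃ v ≠ 0) (h : ∀ a b : F, eval (a • m + b • v) Φ = 0) :
    ∃ N : PGPoint F 2, ∀ P ∈ K, ∀ Q ∈ K, P ≠ Q → N.rep ⬝ᵥ (P.rep ⨯₃ Q.rep) ≠ 0 := by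
  refine ⟨Projectivization.mk F (m ⨯₃ v) hmv, fun P hP Q hQ hPQ hzero => ?_⟩
  obtain ⟨a, ha⟩ := Projectivization.exists_smul_eq_mk_rep F (m ⨯₃ v) hmv
  rw [← ha, smul_dotProduct, smul_eq_zero_iff_eq] at hzero
  obtain ⟨b, c, hbc⟩ := exists_eq_smul_add_smul hmv hzero
  exact hΦ.eval_cross_ne_zero hP hQ hPQ (hbc ▸ h b c)

lemma IsCap.exists_insert [CharP F 2] (hK : IsCap (K : Set (PGPoint F 2))) {s : ℕ}
    (hcard : 3 ≤ K.card) (hs : s + K.card = Fintype.card F + 1) (hsq : s ^ 2 < Fintype.card F)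
    (hF : 2 < Fintype.card F) :
    ∃ N ∉ K, IsCap (insert N (K : Set (PGPoint F 2))) := by
  classical
  have ht : ∀ P ∈ K, (tangentLines K P).card = s + 1 := fun P hP => by
    have := card_tangentLines_add_card hK hcard hP
    omega
  obtain ⟨Φ, hΦ⟩ := hK.exists_isTangentEnvelope (by omega) ht
  obtain ⟨P, hP⟩ := Finset.card_pos.1 (Nat.zero_lt_of_lt hcard)
  obtain ⟨m, hm⟩ := Finset.card_pos.1 (s.succ_pos.trans_eq (ht P hP).symm)
  obtain ⟨v, hPv, hv⟩ := hΦ.exists_eval_smul_add_smul_eq_zero hK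
    (fun i hi => add_mul_sub_one_lt_mul_succ rfl hs hsq hF hi) hP hm
  have hmv : m.rep ⨯₃ v ≠ 0 := fun h => by
    have hcross := cross_cross_eq_smul_sub_smul' P.rep m.rep v
    rw [h, map_zero, (mem_tangentLines.1 hm).1, zero_smul, sub_zero] at hcross
    exact smul_ne_zero hPv m.rep_nonzero hcross.symm
  obtain ⟨N, hN⟩ := hΦ.exists_triple_product_ne_zero hmv hv
  refine ⟨N, fun hNK => ?_, hK.insert_of_not_coll3 fun P hP Q hQ hPQ hcoll =>
    hN P hP Q hQ hPQ (coll3_iff_triple_product_eq_zero.1 hcoll)⟩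
  obtain ⟨Q, hQ, hQN⟩ := Finset.exists_mem_ne (by omega : 1 < K.card) N
  exact hN N hNK Q hQ hQN.symm (dot_self_cross _ _)

/-- Segre's theorem on complete arcs in planes of even order. As the subtraction truncates, the
case `q + 1 ≤ |K|` is included. -/
theorem IsCompleteCap.card_eq [CharP F 2] (hK : IsCompleteCap (K : Set (PGPoint F 2)))
    (hF : 2 < Fintype.card F) (hsq : (Fintype.card F + 1 - K.card) ^ 2 < Fintype.card F) :
    K.card = Fintype.card F + 2 := by
  classical
  have hcard : 3 ≤ K.card := by
    by_contra! h
    have hle : Fintype.card F - 1 ≤ Fintype.card F + 1 - K.card := by omega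
    have hlt := (Nat.pow_le_pow_left hle 2).trans_lt hsq
    obtain ⟨r, hr⟩ := Nat.exists_eq_add_of_lt hF
    rw [hr, Nat.add_sub_cancel] at hlt
    nlinarith
  obtain ⟨P, hP⟩ := Finset.card_pos.1 (Nat.zero_lt_of_lt hcard)
  have hle := card_tangentLines_add_card hK.1 hcard hP
  by_contra hne
  obtain ⟨N, hN, hcap⟩ := hK.1.exists_insert hcard (Nat.sub_add_cancel (by omega)) hsq hF
  exact hK.2 N hN hcap

lemma IsCap.exists_mem_triple_product_eq_zero {H : Finset (PGPoint F 2)}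
    (hH : IsCap (H : Set (PGPoint F 2))) (hcard : H.card = Fintype.card F + 2) {P Q : PGPoint F 2}
    (hQ : Q ∈ H) (hPQ : P ≠ Q) : ∃ R ∈ H, R ≠ Q ∧ P.rep ⬝ᵥ (Q.rep ⨯₃ R.rep) = 0 := by
  classical
  have hF := Fintype.one_lt_card (α := F)
  have htan := card_tangentLines_add_card hH (by omega) hQ
  have hempty : tangentLines H Q = ∅ := by
    rw [← Finset.card_eq_zero]
    omega
  have hnot : P.cross Q ∉ tangentLines H Q := hempty ▸ Finset.notMem_empty _
  rw [mem_tangentLines, cross_rep_dotProduct_eq_zero_iff hPQ, cross_self, dotProduct_zero] at hnot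
  push Not at hnot
  obtain ⟨R, hR, hRQ, hzero⟩ := hnot rfl
  exact ⟨R, hR, hRQ, (cross_rep_dotProduct_eq_zero_iff hPQ R).1 hzero⟩

lemma IsCap.subset_of_card_eq {H₁ H₂ : Finset (PGPoint F 2)} (hH₁ : IsCap (H₁ : Set (PGPoint F 2)))
    (hH₂ : IsCap (H₂ : Set (PGPoint F 2))) (hcard : H₂.card = Fintype.card F + 2) (hK₁ : K ⊆ H₁)
    (hK₂ : K ⊆ H₂) (hK : Fintype.card F + 2 < 2 * K.card) : H₁ ⊆ H₂ := by
  classical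
  intro P hP
  by_contra hP₂
  have hne : ∀ Q ∈ H₂, P ≠ Q := fun Q hQ => (ne_of_mem_of_not_mem hQ hP₂).symm
  choose! f hf hfne hzero using fun Q (hQ : Q ∈ K) =>
    hH₂.exists_mem_triple_product_eq_zero hcard (hK₂ hQ) (hne Q (hK₂ hQ))
  have hfK : ∀ Q ∈ K, f Q ∉ K := fun Q hQ hfQ =>
    hH₁.triple_product_ne_zero hP (hK₁ hQ) (hK₁ hfQ) (hne Q (hK₂ hQ)) (hne (f Q) (hf Q hQ))
      (hfne Q hQ).symm (hzero Q hQ)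
  have hinj : Set.InjOn f K := by
    intro Q hQ R hR hQR
    by_contra hne'
    have h₃ := hH₂.triple_product_ne_zero (hK₂ hQ) (hK₂ hR) (hf R hR) hne'
      (hQR ▸ (hfne Q hQ).symm) (hfne R hR).symm
    have hline : ∀ S ∈ K, (P.rep ⨯₃ (f S).rep) ⬝ᵥ S.rep = 0 := fun S hS => by
      rw [cross_dotProduct, ← cross_anticomm, dotProduct_neg, hzero S hS, neg_zero]
    exact cross_rep_ne_zero (hne (f R) (hf R hR)) (eq_zero_of_triple_product_ne_zero h₃
      (hQR ▸ hline Q hQ) (hline R hR) (by rw [dotProduct_comm, dot_cross_self]))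
  have himage : K.image f ⊆ H₂ \ K := Finset.image_subset_iff.2 fun Q hQ =>
    Finset.mem_sdiff.2 ⟨hf Q hQ, hfK Q hQ⟩
  have hle := Finset.card_le_card himage
  rw [Finset.card_image_of_injOn hinj, Finset.card_sdiff_of_subset hK₂, hcard] at hle
  omega

lemma IsCap.exists_superset_card_eq [CharP F 2] (hK : IsCap (K : Set (PGPoint F 2)))
    (hF : 2 < Fintype.card F) (hsq : (Fintype.card F + 1 - K.card) ^ 2 < Fintype.card F) :
    ∃ A : Finset (PGPoint F 2), IsCap (A : Set (PGPoint F 2)) ∧ A.card = Fintype.card F + 2 ∧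
      K ⊆ A := by
  obtain ⟨A, hA, hKA⟩ := hK.exists_isCompleteCap
  lift A to Finset (PGPoint F 2) using A.toFinite
  have hKA : K ⊆ A := Finset.coe_subset.1 hKA
  have hle : Fintype.card F + 1 - A.card ≤ Fintype.card F + 1 - K.card :=
    Nat.sub_le_sub_left (Finset.card_le_card hKA) _
  exact ⟨A, hA.1, hA.card_eq hF ((Nat.pow_le_pow_left hle 2).trans_lt hsq), hKA⟩

end FinitePlane

end Plane

lemma sq_tsub_lt_of_sub_sqrt_lt {q k : ℕ} (hk₁ : (q : ℝ) - √q + 1 < k) (hk₂ : k ≤ q + 1) :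
    (q + 1 - k) ^ 2 < q := by
  have hk₂' : (k : ℝ) ≤ q + 1 := by exact_mod_cast hk₂
  have hsq := Real.sq_sqrt (Nat.cast_nonneg (α := ℝ) q)
  have hlt : ((q : ℝ) + 1 - k) ^ 2 < q := by nlinarith [Real.sqrt_nonneg (q : ℝ)]
  rw [← Nat.cast_lt (α := ℝ)]
  push_cast [Nat.cast_sub hk₂]
  exact hlt

lemma add_two_lt_two_mul_of_sq_tsub_lt {q k : ℕ} (hq : 4 ≤ q) (h : (q + 1 - k) ^ 2 < q) :
    q + 2 < 2 * k := by
  by_contra! hle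
  obtain ⟨d, hd⟩ : ∃ d, q + 1 - k = d := ⟨_, rfl⟩
  rw [hd] at h
  nlinarith [show q ≤ 2 * d by omega]

theorem stmt18 (F : Type*) [Field F] [Fintype F] (q : ℕ) (hcard : Fintype.card F = q)
    (hqeven : Even q) (hq : 2 < q)
    (K : Set (PGPoint F 2)) (hK : IsCap K)
    (hk₁ : (q : ℝ) - Real.sqrt q + 1 < (K.ncard : ℝ)) (hk₂ : K.ncard ≤ q + 1) :
    ∃! A : Set (PGPoint F 2), IsCap A ∧ A.ncard = q + 2 ∧ K ⊆ A := by
  subst hcard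
  have : CharP F 2 :=
    ringChar.of_eq (FiniteField.even_card_iff_char_two.2 (Nat.even_iff.1 hqeven))
  lift K to Finset (PGPoint F 2) using K.toFinite
  rw [Set.ncard_coe_finset] at hk₁ hk₂
  have hsq := sq_tsub_lt_of_sub_sqrt_lt hk₁ hk₂
  have htwo := add_two_lt_two_mul_of_sq_tsub_lt (by grind) hsq
  obtain ⟨A, hA, hAcard, hKA⟩ := hK.exists_superset_card_eq hq hsq
  refine ⟨A, ⟨hA, by rwa [Set.ncard_coe_finset], by exact_mod_cast hKA⟩, ?_⟩
  rintro B ⟨hB, hBcard, hKB⟩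
  lift B to Finset (PGPoint F 2) using B.toFinite
  rw [Set.ncard_coe_finset] at hBcard
  exact Finset.coe_inj.2 (Finset.eq_of_subset_of_card_le
    (hB.subset_of_card_eq hA hAcard (by exact_mod_cast hKB) hKA htwo) (by omega))
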